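/- arXiv:2203.05487 — 14 statements merged into one kernel-verified Lean document; each statement's English description precedes it below -/
import Mathlib

section
/- Let G be the graph obtained as follows: take pairwise disjoint copies K_1, K_2, K_3, ... of the graph K (with the vertices of K_i written x_i, y_i, z_i, z'_i, t_i, t'_i, w_i), identify y_i with x_{i+1} for every i ≥ 1, and add one further vertex 0 joined to x_i and to y_i for every i. Then G is cop-win, but G is not constructible. -/
universe u

/-- `y` dominates `x` in `G`: `y ≠ x` and the closed neighbourhood of `x` is contained
in the closed neighbourhood of `y`. -/
def Dominates {V : Type u} (G : SimpleGraph V) (y x : V) : Prop :=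
  y ≠ x ∧ ∀ z : V, (z = x ∨ G.Adj x z) → (z = y ∨ G.Adj y z)

/-- `y` dominates `x` in the subgraph of `G` induced by `S`. -/
def DominatesOn {V : Type u} (G : SimpleGraph V) (S : Set V) (y x : V) : Prop :=
  y ≠ x ∧ ∀ z ∈ S, (z = x ∨ G.Adj x z) → (z = y ∨ G.Adj y z)

/-- `r` (a well-order on `V`) is a construction order for `G`: every non-root vertex `x`
(i.e. one with a strictly earlier vertex) is dominated, in the subgraph induced by the
vertices up to and including `x`, by some strictly earlier vertex. -/
def ConstructionOrderSpec {V : Type u} (G : SimpleGraph V) (r : V → V → Prop) : Prop :=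
  ∀ x : V, (∃ y, r y x) → ∃ y, r y x ∧ DominatesOn G {z | r z x ∨ z = x} y x

/-- A graph is constructible if it has a construction order. -/
def Constructible {V : Type u} (G : SimpleGraph V) : Prop :=
  ∃ r : V → V → Prop, IsWellOrder V r ∧ ConstructionOrderSpec G r

/-- Given a cop strategy `σ` (a function of the robber's history of positions) and a robber
position sequence `r`, the cop's position at time `n`: the cop has seen the robber's first
`n` positions when making his `n`-th move. `copPos σ r 0 = σ []` is the cop's start. -/
def copPos {V : Type u} (σ : List V → V) (r : ℕ → V) (n : ℕ) : V :=
  σ (List.ofFn fun i : Fin n => r i.val)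

/-- A cop strategy is legal if each successive position is equal or adjacent to the previous one. -/
def LegalCop {V : Type u} (G : SimpleGraph V) (σ : List V → V) : Prop :=
  ∀ l : List V, l ≠ [] → σ l = σ l.dropLast ∨ G.Adj (σ l.dropLast) (σ l)

/-- A legal robber position sequence: each move is to an adjacent vertex or staying put. -/
def LegalRun {V : Type u} (G : SimpleGraph V) (r : ℕ → V) : Prop :=
  ∀ n : ℕ, r (n + 1) = r n ∨ G.Adj (r n) (r (n + 1))

/-- The cop catches the robber: at some time their positions coincide (either just after the
robber's move, or just after the cop's move). -/
def Caught {V : Type u} (σ : List V → V) (r : ℕ → V) : Prop :=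
  ∃ n : ℕ, copPos σ r n = r n ∨ copPos σ r (n + 1) = r n

/-- `G` is cop-win: the cop has a legal strategy catching every legal robber play. -/
def CopWin {V : Type u} (G : SimpleGraph V) : Prop :=
  ∃ σ : List V → V, LegalCop G σ ∧ ∀ r : ℕ → V, LegalRun G r → Caught σ r

/-- `G` is a weak cop win: the cop has a legal strategy guaranteeing that in every legal robber
play, either the robber is caught or the robber occupies each vertex at only finitely many times. -/
def WeakCopWin {V : Type u} (G : SimpleGraph V) : Prop :=
  ∃ σ : List V → V, LegalCop G σ ∧
    ∀ r : ℕ → V, LegalRun G r → Caught σ r ∨ ∀ v : V, {n : ℕ | r n = v}.Finite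

/-- Vertices of the chain graph: `O` is the extra vertex `0`; for each `i : ℕ`, the `(i+1)`-st
copy `K_{i+1}` of `K` has `x = X i`, `y = X (i+1)` (so that `y_i` is identified with `x_{i+1}`),
and the remaining vertices `Z i, Z' i, T i, T' i, W i`. -/
inductive ChainVert : Type
  | O | X (i : ℕ) | Z (i : ℕ) | Z' (i : ℕ) | T (i : ℕ) | T' (i : ℕ) | W (i : ℕ)

open ChainVert in
/-- The edges: the `K`-edges within each copy, together with `0` joined to every `x_i` and `y_i`. -/
def ChainRel : ChainVert → ChainVert → Prop := fun a b =>
  (∃ i : ℕ,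
    (a = X i ∧ b = X (i + 1)) ∨ (a = X i ∧ b = T i) ∨ (a = X i ∧ b = T' i) ∨
    (a = X (i + 1) ∧ b = Z i) ∨ (a = X (i + 1) ∧ b = Z' i) ∨
    (a = X (i + 1) ∧ b = T i) ∨ (a = X (i + 1) ∧ b = T' i) ∨
    (a = Z i ∧ b = Z' i) ∨ (a = Z i ∧ b = T i) ∨ (a = Z i ∧ b = W i) ∨
    (a = Z' i ∧ b = T' i) ∨ (a = Z' i ∧ b = W i) ∨
    (a = T i ∧ b = W i) ∨ (a = T' i ∧ b = W i)) ∨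
  (∃ i : ℕ, a = O ∧ b = X i)

/-- The graph of Theorem 3: a one-way infinite chain of copies of `K` (with `y_i = x_{i+1}`),
together with a vertex `0` joined to all the `x_i` and `y_i`. -/
def ChainGraph : SimpleGraph ChainVert := SimpleGraph.fromRel ChainRel

open ChainVert

def CAdj : ChainVert → ChainVert → Prop
  | O, X _ => True
  | X _, O => True
  | X i, X j => j = i + 1 ∨ i = j + 1
  | X j, T i => j = i ∨ j = i + 1
  | T i, X j => j = i ∨ j = i + 1
  | X j, T' i => j = i ∨ j = i + 1
  | T' i, X j => j = i ∨ j = i + 1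
  | X j, Z i => j = i + 1
  | Z i, X j => j = i + 1
  | X j, Z' i => j = i + 1
  | Z' i, X j => j = i + 1
  | Z i, Z' j => i = j
  | Z' i, Z j => i = j
  | Z i, T j => i = j
  | T i, Z j => i = j
  | Z i, W j => i = j
  | W i, Z j => i = j
  | Z' i, T' j => i = j
  | T' i, Z' j => i = j
  | Z' i, W j => i = j
  | W i, Z' j => i = j
  | T i, W j => i = j
  | W i, T j => i = j
  | T' i, W j => i = j
  | W i, T' j => i = j
  | _, _ => False

theorem cadj_iff (a b : ChainVert) : ChainGraph.Adj a b ↔ CAdj a b := by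
  unfold ChainGraph
  rw [SimpleGraph.fromRel_adj]
  cases a <;> cases b <;> simp [ChainRel, CAdj] <;> grind

theorem not_constr : ¬ Constructible ChainGraph := by
  rintro ⟨r, hr, hc⟩
  classical
  obtain ⟨v, ⟨m, rfl⟩, hmin⟩ := hr.wf.has_min (Set.range X) ⟨X 0, 0, rfl⟩
  have hm : r (X m) (X (m+1)) := by
    rcases trichotomous_of r (X m) (X (m+1)) with h | h | h
    · exact h
    · simp at h
    · exact absurd h (hmin _ ⟨_, rfl⟩)
  let S : Finset ChainVert := {X m, X (m+1), Z m, Z' m, T m, T' m, W m}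
  have hmax : ∃ v ∈ S, ∀ k ∈ S, r k v ∨ k = v := by
    letI := linearOrderOfSTO r
    obtain ⟨v, hv, h⟩ := S.exists_max_image id ⟨X m, by simp [S]⟩
    refine ⟨v, hv, fun k hk => ?_⟩
    rcases lt_or_eq_of_le (h k hk) with h | h
    · exact Or.inl h
    · exact Or.inr h
  obtain ⟨v, hv, h⟩ := hmax
  have hne : v ≠ X m := by
    rintro rfl
    rcases h (X (m+1)) (by simp [S]) with h | h
    · exact asymm_of r h hm
    · simp at h
  have hlt : r (X m) v := (h (X m) (by simp [S])).resolve_right (Ne.symm hne)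
  obtain ⟨y, -, hy, hd⟩ := hc v ⟨_, hlt⟩
  have hd' : ∀ z ∈ S, (z = v ∨ CAdj v z) → (z = y ∨ CAdj y z) := by
    intro z hz
    have := hd z (h z hz)
    simpa only [cadj_iff] using this
  simp only [S, Finset.forall_mem_insert, Finset.mem_singleton, forall_eq] at hd'
  simp only [S, Finset.mem_insert, Finset.mem_singleton] at hv
  clear hd hc h hmin hm hlt
  rcases hv with rfl | rfl | rfl | rfl | rfl | rfl | rfl
  · exact hne rfl
  all_goals cases y <;> simp [CAdj] at hd' hy <;> omega

def tgt : ChainVert → ChainVert → ChainVert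
  | Z i, _ => Z' i
  | Z' i, _ => X (i+1)
  | X _, W i => Z i
  | X _, X _ => O
  | _, Z i => X (i+1)
  | _, Z' i => X (i+1)
  | _, T i => X (i+1)
  | _, T' i => X (i+1)
  | _, W i => X (i+1)
  | c, _ => c

open Classical in
noncomputable def stp (c r : ChainVert) : ChainVert :=
  if r = c ∨ CAdj c r then r else if CAdj c (tgt c r) then tgt c r else c

inductive Win : ChainVert → ChainVert → Prop
  | now {c r} : (r = c ∨ CAdj c r) → Win c r
  | step {c r} : (∀ r', (r' = r ∨ CAdj r r') → Win (stp c r) r') → Win c r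

theorem Win.tgt {c r d : ChainVert} (h0 : ¬ (r = c ∨ CAdj c r)) (hd : tgt c r = d) (h : CAdj c d)
    (H : ∀ r', (r' = r ∨ CAdj r r') → ¬ (r' = d ∨ CAdj d r') → Win d r') : Win c r := by
  subst hd
  apply Win.step
  intro r' hr'
  have : stp c r = _root_.tgt c r := by simp [stp, h0, h]
  rw [this]
  by_cases h1 : r' = _root_.tgt c r ∨ CAdj (_root_.tgt c r) r'
  · exact .now h1
  · exact H r' hr' h1

theorem win_caught {c r : ChainVert} (h : Win c r) : ∀ (R : ℕ → ChainVert),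
    LegalRun ChainGraph R → ∀ n, copPos (List.foldl stp O) R n = c → R n = r →
    Caught (List.foldl stp O) R := by
  have key : ∀ (R : ℕ → ChainVert) n, copPos (List.foldl stp O) R (n+1) =
      stp (copPos (List.foldl stp O) R n) (R n) := by
    intro R n
    unfold copPos
    rw [List.ofFn_succ_last, List.foldl_append]
    rfl
  induction h with
  | now h =>
    intro R _ n hc hr
    refine ⟨n, Or.inr ?_⟩
    rw [key, hc, hr]
    simp [stp, h]
  | step _ ih =>
    intro R hR n hc hr
    refine ih (R (n+1)) ?_ R hR (n+1) (by rw [key, hc, hr]) rfl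
    have := hR n
    rw [hr, cadj_iff] at this
    exact this

/-- robber in the interior of copy `j`, cop about to go to `X (j+1)` -/
theorem win_in {c r : ChainVert} {j : ℕ} (hW : Win (X (j+1)) (W j))
    (hr : r = Z j ∨ r = Z' j ∨ r = T j ∨ r = T' j ∨ r = W j)
    (hc : c = O ∨ (∃ k, c = X k ∧ (k = j ∨ k = j + 2) ∧ r ≠ W j)) : Win c r := by
  by_cases h0 : r = c ∨ CAdj c r
  · exact .now h0
  refine Win.tgt (d := X (j+1)) h0 ?_ ?_ ?_
  · rcases hc with rfl | ⟨k, rfl, hk, hne⟩ <;> rcases hr with rfl | rfl | rfl | rfl | rfl <;>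
      simp_all [tgt]
  · rcases hc with rfl | ⟨k, rfl, hk, hne⟩ <;> simp [CAdj]; omega
  · intro r' h1 h2
    have : r' = W j := by
      rcases hr with rfl | rfl | rfl | rfl | rfl <;> cases r' <;> simp [CAdj] at h1 h2 ⊢ <;> omega
    rw [this]; exact hW

theorem win_W (i : ℕ) : Win (X (i+1)) (W i) := by
  induction i using Nat.strong_induction_on with
  | _ i ih =>
  refine Win.tgt (d := Z i) (by simp [CAdj]) rfl (by simp [CAdj]) ?_
  intro r h1 h2
  have : r = T' i := by
    cases r <;> simp [CAdj] at h1 h2 ⊢ <;> omega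
  subst this
  refine Win.tgt (d := Z' i) (by simp [CAdj]) rfl (by simp [CAdj]) ?_
  intro r h1 h2
  have : r = X i := by
    cases r <;> simp [CAdj] at h1 h2 ⊢ <;> omega
  subst this
  refine Win.tgt (d := X (i+1)) (by simp [CAdj]) rfl (by simp [CAdj]) ?_
  intro r h1 h2
  have : ∃ j, i = j + 1 ∧ (r = X j ∨ r = Z j ∨ r = Z' j ∨ r = T j ∨ r = T' j) := by
    cases i <;> cases r <;> simp [CAdj] at h1 h2 ⊢ <;> omega
  obtain ⟨j, rfl, hr⟩ := this
  rcases hr with rfl | hr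
  · refine Win.tgt (d := O) (by simp [CAdj]; try omega) rfl (by simp [CAdj]) ?_
    intro r h1 h2
    have : ∃ k, k < j + 1 ∧ (r = Z k ∨ r = Z' k ∨ r = T k ∨ r = T' k ∨ r = W k) := by
      cases r <;> simp [CAdj] at h1 h2 ⊢ <;> omega
    obtain ⟨k, hk, hr⟩ := this
    exact win_in (ih k hk) hr (Or.inl rfl)
  · refine win_in (j := j) (ih j (by omega)) (by tauto) (Or.inr ⟨_, rfl, Or.inr rfl, ?_⟩)
    rcases hr with rfl | rfl | rfl | rfl <;> simp

theorem win_start (r : ChainVert) : Win O r := by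
  cases r with
  | O => exact .now (Or.inl rfl)
  | X i => exact .now (Or.inr trivial)
  | _ i => exact win_in (win_W i) (by simp) (Or.inl rfl)

theorem copwin : CopWin ChainGraph := by
  refine ⟨List.foldl stp O, ?_, ?_⟩
  · intro l hl
    obtain ⟨l', a, rfl⟩ : ∃ l' a, l = l' ++ [a] :=
      ⟨_, _, (List.dropLast_append_getLast hl).symm⟩
    simp only [List.dropLast_concat, List.foldl_append, List.foldl_cons, List.foldl_nil, cadj_iff]
    generalize List.foldl stp O l' = c
    unfold stp
    split_ifs with h1 h2
    · exact h1
    · exact Or.inr h2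
    · exact Or.inl rfl
  · intro R hR
    exact win_caught (win_start (R 0)) R hR 0 (by simp [copPos]) rfl

theorem chainGraph_copWin_not_constructible :
    CopWin ChainGraph ∧ ¬ Constructible ChainGraph := by
  exact ⟨copwin, not_constr⟩
end

section
/- There exists a finite constructible graph G such that for every construction order of G and every domination map δ associated to that order, δ is not a graph homomorphism; that is, there exist two adjacent non-root vertices u and v of G such that δ(u) and δ(v) are neither adjacent nor equal. (A witness is the graph obtained from two disjoint copies K_1, K_2 of the graph K by identifying the vertex x of K_1 with the vertex y of K_2.) -/
universe u

/-- `δ` is a domination map for the construction order `r` on `G`: it assigns to each non-root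
vertex `x` a strictly earlier vertex dominating `x` in the subgraph induced by the vertices up
to and including `x`. -/
def IsDominationMap {V : Type u} (G : SimpleGraph V) (r : V → V → Prop) (δ : V → V) : Prop :=
  ∀ x : V, (∃ y, r y x) → r (δ x) x ∧ DominatesOn G {z | r z x ∨ z = x} (δ x) x


/-- Boolean adjacency of the 8-vertex witness (smaller number first). -/
def wEdges : List (Fin 8 × Fin 8) :=
  [(3,4), (2,4), (2,3), (4,5), (3,5), (5,7), (4,6), (5,6), (6,7), (1,4), (1,2), (1,7), (1,6),
   (0,3), (0,2), (0,5), (0,1)]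

def wAdj (a b : Fin 8) : Bool := wEdges.contains (a, b) || wEdges.contains (b, a)

def wGraph : SimpleGraph (Fin 8) where
  Adj a b := wAdj a b = true
  symm := ⟨by decide⟩
  loopless := ⟨by decide⟩

instance : DecidableRel wGraph.Adj := fun a b => inferInstanceAs (Decidable (wAdj a b = true))

/-- In the set `R`, the greatest vertex `v` is non-root and dominated by `δ v ∈ R`. -/
lemma w_step (r : Fin 8 → Fin 8 → Prop) (hr : IsWellOrder (Fin 8) r) (δ : Fin 8 → Fin 8)
    (hδ : IsDominationMap wGraph r δ) (R : Finset (Fin 8)) (hR : 1 < R.card)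
    (hlow : ∀ a ∈ R, ∀ b, b ∉ R → r a b) :
    ∃ v ∈ R, (∀ a ∈ R.erase v, ∀ b, b ∉ R.erase v → r a b) ∧ (∃ a, r a v) ∧ δ v ∈ R ∧ δ v ≠ v ∧
      ∀ z ∈ R, (z = v ∨ wGraph.Adj v z) → (z = δ v ∨ wGraph.Adj (δ v) z) := by
  have hne : R.Nonempty := Finset.card_pos.mp (by omega)
  have hmax : ∃ v ∈ R, ∀ a ∈ R, ¬ r v a := by
    have : WellFounded (Function.swap r) := by
      have : Std.Irrefl (Function.swap r) := ⟨fun a h => irrefl_of r a h⟩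
      have : IsTrans (Fin 8) (Function.swap r) := ⟨fun a b c h1 h2 => trans_of r h2 h1⟩
      exact Finite.wellFounded_of_trans_of_irrefl _
    obtain ⟨v, hv, h⟩ := this.has_min (R : Set (Fin 8)) hne
    exact ⟨v, hv, fun a ha h' => h a ha h'⟩
  obtain ⟨v, hv, hm⟩ := hmax
  have hlt : ∀ a ∈ R, a ≠ v → r a v := fun a ha hav => by
    rcases trichotomous_of r a v with h | h | h
    · exact h
    · exact absurd h hav
    · exact absurd h (hm a ha)
  obtain ⟨a, ha, hav⟩ := Finset.exists_mem_ne hR v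
  obtain ⟨h1, h2, h3⟩ := hδ v ⟨a, hlt a ha hav⟩
  refine ⟨v, hv, ?_, ⟨a, hlt a ha hav⟩, ?_, h2, ?_⟩
  · intro c hc b hb
    rw [Finset.mem_erase] at hc hb
    by_cases hbv : b = v
    · subst hbv; exact hlt c hc.2 hc.1
    · exact hlow c hc.2 b (fun h => hb ⟨hbv, h⟩)
  · by_contra h
    exact asymm_of r h1 (hlow v hv _ h)
  · intro z hz
    refine h3 z ?_
    by_cases hzv : z = v
    · exact Or.inr hzv
    · exact Or.inl (hlt z hz hzv)

theorem exists_finite_constructible_no_hom_domination_map :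
    ∃ (V : Type) (_ : Finite V) (G : SimpleGraph V),
      Constructible G ∧
      ∀ r : V → V → Prop, IsWellOrder V r → ConstructionOrderSpec G r →
        ∀ δ : V → V, IsDominationMap G r δ →
          ∃ u v : V, G.Adj u v ∧ (∃ u₀, r u₀ u) ∧ (∃ v₀, r v₀ v) ∧
            δ u ≠ δ v ∧ ¬ G.Adj (δ u) (δ v) := by
  refine ⟨Fin 8, inferInstance, wGraph, ⟨(· < ·), inferInstance, ?_⟩, ?_⟩
  · have key : ∀ x : Fin 8, (∃ y, y < x) → ∃ y, y < x ∧ (y ≠ x ∧ ∀ z : Fin 8, (z < x ∨ z = x) →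
        (z = x ∨ wGraph.Adj x z) → (z = y ∨ wGraph.Adj y z)) := by decide
    exact key
  · intro r hr _ δ hδ
    obtain ⟨v, hv, hl, hroot, hm, hne, hd⟩ := w_step r hr δ hδ Finset.univ (by decide)
      (fun _ _ b hb => absurd (Finset.mem_univ b) hb)
    have k1 : ∀ v p : Fin 8, p ≠ v → (∀ z ∈ (Finset.univ : Finset (Fin 8)),
        (z = v ∨ wGraph.Adj v z) → (z = p ∨ wGraph.Adj p z)) → v = 7 ∧ p = 6 := by decide
    obtain ⟨rfl, h7⟩ := k1 v (δ v) hne hd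
    obtain ⟨v, hv', hl', hroot', hm', hne', hd'⟩ := w_step r hr δ hδ _ (by decide) hl
    have k2 : ∀ v ∈ (Finset.univ : Finset (Fin 8)).erase 7,
        ∀ p ∈ (Finset.univ : Finset (Fin 8)).erase 7, p ≠ v →
        (∀ z ∈ (Finset.univ : Finset (Fin 8)).erase 7,
        (z = v ∨ wGraph.Adj v z) → (z = p ∨ wGraph.Adj p z)) →
        (wGraph.Adj 7 v ∧ 6 ≠ p ∧ ¬ wGraph.Adj 6 p) ∨ (v = 6 ∧ p = 4) := by decide
    rcases k2 v hv' (δ v) hm' hne' hd' with h | ⟨rfl, h6⟩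
    · exact ⟨7, v, h.1, hroot, hroot', h7 ▸ h.2.1, h7 ▸ h.2.2⟩
    obtain ⟨v, hv2, hl2, hroot2, hm2, hne2, hd2⟩ := w_step r hr δ hδ _ (by decide) hl'
    have k3 : ∀ v ∈ ((Finset.univ : Finset (Fin 8)).erase 7).erase 6,
        ∀ p ∈ ((Finset.univ : Finset (Fin 8)).erase 7).erase 6, p ≠ v →
        (∀ z ∈ ((Finset.univ : Finset (Fin 8)).erase 7).erase 6,
        (z = v ∨ wGraph.Adj v z) → (z = p ∨ wGraph.Adj p z)) →
        (wGraph.Adj 7 v ∧ 6 ≠ p ∧ ¬ wGraph.Adj 6 p) ∨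
        (wGraph.Adj 6 v ∧ 4 ≠ p ∧ ¬ wGraph.Adj 4 p) := by decide
    rcases k3 v hv2 (δ v) hm2 hne2 hd2 with h | h
    · exact ⟨7, v, h.1, hroot, hroot2, h7 ▸ h.2.1, h7 ▸ h.2.2⟩
    · exact ⟨6, v, h.1, hroot', hroot2, h6 ▸ h.2.1, h6 ▸ h.2.2⟩
end

section
/- There exists a countable connected graph that is locally constructible but is not a weak cop win. -/
universe u

/-- `G` is locally constructible: every finite set of vertices is contained in a finite set
inducing a constructible subgraph. -/
def LocallyConstructible {V : Type u} (G : SimpleGraph V) : Prop :=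
  ∀ A : Set V, A.Finite → ∃ U : Set V, A ⊆ U ∧ U.Finite ∧ Constructible (G.induce U)

namespace LCGraph

/-- Base vertices: three return points, and a ray. -/
abbrev B := Fin 3 ⊕ ℕ

/-- Birth time of a base vertex. -/
def birth : B → ℕ
  | Sum.inl _ => 0
  | Sum.inr t => t

/-- Reflexive adjacency in the base graph. -/
def BA : B → B → Prop
  | Sum.inl i, Sum.inl j => i = j
  | Sum.inl i, Sum.inr t => t % 3 = i.val
  | Sum.inr t, Sum.inl i => t % 3 = i.val
  | Sum.inr s, Sum.inr t => s = t ∨ s + 1 = t ∨ t + 1 = s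

/-- Vertices: an apex, originals `(b, none)`, and copies `(b, some k)` at level `birth b + k`. -/
abbrev V := Option (B × Option ℕ)

/-- Reflexive adjacency. -/
def R : V → V → Prop
  | none, none => True
  | none, some (_, none) => False
  | none, some (_, some _) => True
  | some (_, none), none => False
  | some (_, some _), none => True
  | some (b, none), some (b', none) => BA b b'
  | some (b, none), some (b', some k) => BA b b' ∧ birth b ≤ birth b' + k
  | some (b, some k), some (b', none) => BA b b' ∧ birth b' ≤ birth b + k
  | some (b, some k), some (b', some k') =>
      BA b b' ∧ birth b ≤ birth b' + k' ∧ birth b' ≤ birth b + k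

lemma BA_refl (b : B) : BA b b := by
  rcases b with i | t <;> simp [BA]

lemma BA_symm {b c : B} (h : BA b c) : BA c b := by
  rcases b with i | t <;> rcases c with j | s <;> simp only [BA] at * <;> omega

lemma R_refl (x : V) : R x x := by
  rcases x with _ | ⟨b, _ | k⟩ <;> simp [R, BA_refl]

lemma R_symm {x y : V} (h : R x y) : R y x := by
  rcases x with _ | ⟨b, _ | k⟩ <;> rcases y with _ | ⟨c, _ | l⟩ <;> simp only [R] at * <;>
    first
    | exact BA_symm h
    | exact ⟨BA_symm h.1, h.2⟩
    | exact ⟨BA_symm h.1, h.2.2, h.2.1⟩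

/-- The graph. -/
def G : SimpleGraph V where
  Adj x y := x ≠ y ∧ R x y
  symm := ⟨fun _ _ h => ⟨h.1.symm, R_symm h.2⟩⟩
  loopless := ⟨fun _ h => h.1 rfl⟩

lemma G_adj {x y : V} : G.Adj x y ↔ x ≠ y ∧ R x y := Iff.rfl

lemma closed_iff {x y : V} : (y = x ∨ G.Adj x y) ↔ R x y := by
  constructor
  · rintro (h | h)
    · subst h; exact R_refl _
    · exact h.2
  · intro h
    by_cases e : y = x
    · exact Or.inl e
    · exact Or.inr ⟨fun h => e h.symm, h⟩

lemma connected : G.Connected := by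
  have h : ∀ x : V, G.Reachable x none := by
    have h1 : ∀ b k, G.Reachable (some (b, some k)) none := fun b k =>
      SimpleGraph.Adj.reachable (by simp [G_adj, R])
    rintro (_ | ⟨b, _ | k⟩)
    · exact SimpleGraph.Reachable.refl _
    · refine SimpleGraph.Reachable.trans (SimpleGraph.Adj.reachable ?_) (h1 b 0)
      simp [G_adj, R, BA_refl]
    · exact h1 b k
  have : Nonempty V := ⟨none⟩
  exact SimpleGraph.Connected.mk (fun x y => (h x).trans (h y).symm)

/-- Phases of the construction order. -/
def phase (n : ℕ) : V → ℕ
  | none => 0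
  | some (_, none) => 2
  | some (b, some k) => if birth b + k = n then 1 else 2

lemma locallyConstructible : LocallyConstructible G := by
  intro A hA
  let lev : V → ℕ := fun x => match x with
    | none => 0
    | some (b, none) => birth b
    | some (b, some k) => birth b + k
  obtain ⟨n, hn⟩ := (hA.image lev).bddAbove
  let X : Set B := {b | ∃ o, some (b, o) ∈ A}
  have hXf : X.Finite := by
    have : X ⊆ (fun x : V => match x with | none => Sum.inl 0 | some (b, _) => b) '' A := by
      rintro b ⟨o, ho⟩
      exact ⟨_, ho, rfl⟩
    exact (hA.image _).subset this
  have hXn : ∀ b ∈ X, birth b ≤ n := by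
    rintro b ⟨o, ho⟩
    have := hn ⟨_, ho, rfl⟩
    rcases o with _ | k <;> simp only [lev] at this <;> omega
  let U : Set V := {x | ∀ b o, x = some (b, o) → b ∈ X ∧ ∀ k, o = some k → birth b + k ≤ n}
  refine ⟨U, ?_, ?_, ?_⟩
  · rintro x hx b o rfl
    refine ⟨⟨o, hx⟩, ?_⟩
    rintro k rfl
    exact hn ⟨_, hx, rfl⟩
  · have : U ⊆ insert none (some '' (X ×ˢ (insert none (some '' Set.Iic n)))) := by
      rintro (_ | ⟨b, o⟩) hx
      · simp
      · obtain ⟨h1, h2⟩ := hx b o rfl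
        right
        refine ⟨_, ⟨h1, ?_⟩, rfl⟩
        rcases o with _ | k
        · simp
        · right
          exact ⟨k, by have := h2 k rfl; simp only [Set.mem_Iic]; omega, rfl⟩
    refine Set.Finite.subset ?_ this
    exact (((hXf.prod (((Set.finite_Iic n).image _).insert _)).image _).insert _)
  · obtain ⟨enc, henc⟩ := exists_injective_nat V
    let e : U → ℕ ×ₗ ℕ := fun x => toLex (phase n x.1, enc x.1)
    have he : Function.Injective e := by
      intro x y h
      have := congrArg (fun p => (ofLex p).2) h
      exact Subtype.ext (henc this)
    let emb : (fun x y : U => e x < e y) ↪r ((· < ·) : ℕ ×ₗ ℕ → ℕ ×ₗ ℕ → Prop) :=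
      ⟨⟨e, he⟩, Iff.rfl⟩
    refine ⟨fun x y => e x < e y, emb.isWellOrder, ?_⟩
    have hlt : ∀ x y : U, phase n x.1 < phase n y.1 → e x < e y := by
      intro x y h
      exact Prod.Lex.toLex_lt_toLex.2 (Or.inl h)
    have hle : ∀ x y : U, e x < e y → phase n x.1 ≤ phase n y.1 := by
      intro x y h
      rcases Prod.Lex.toLex_lt_toLex.1 h with h | h
      · exact h.le
      · exact h.1.le
    have key : ∀ (S : Set U) (x y : U), y ≠ x → (∀ z ∈ S, R x.1 z.1 → R y.1 z.1) →
        DominatesOn (G.induce U) S y x := by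
      intro S x y hne h
      refine ⟨hne, fun z hz hxz => ?_⟩
      have h1 : z.1 = x.1 ∨ G.Adj x.1 z.1 := by
        rcases hxz with h | h
        · exact Or.inl (congrArg _ h)
        · exact Or.inr h
      rcases closed_iff.2 (h z hz (closed_iff.1 h1)) with h | h
      · exact Or.inl (Subtype.ext h)
      · exact Or.inr h
    have hnone : (none : V) ∈ U := by intro b o h; simp at h
    have htop : ∀ b ∈ X, (some (b, some (n - birth b)) : V) ∈ U := by
      intro b hb b' o h
      simp only [Option.some.injEq, Prod.mk.injEq] at h
      obtain ⟨rfl, rfl⟩ := h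
      refine ⟨hb, ?_⟩
      intro k hk
      have := hXn b hb
      simp only [Option.some.injEq] at hk
      omega
    have hptop : ∀ b ∈ X, phase n (some (b, some (n - birth b))) = 1 := by
      intro b hb
      have := hXn b hb
      simp only [phase]
      rw [if_pos (by omega)]
    intro x hx
    obtain ⟨w, hw⟩ := hx
    obtain ⟨x, hxU⟩ := x
    by_cases hx1 : phase n x ≤ 1
    · rcases x with _ | ⟨b, _ | k⟩
      · exfalso
        have h0 := hle _ _ hw
        obtain ⟨w, hwU⟩ := w
        have hwn : w = none := by
          rcases w with _ | ⟨b, _ | k⟩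
          · rfl
          · simp [phase] at h0
          · simp only [phase] at h0; split_ifs at h0 <;> omega
        subst hwn
        exact lt_irrefl _ hw
      · simp [phase] at hx1
      · have hph : phase n (none : V) < phase n (some (b, some k)) := by
          simp only [phase]; split_ifs <;> omega
        have hl := hlt ⟨none, hnone⟩ ⟨some (b, some k), hxU⟩ hph
        refine ⟨⟨none, hnone⟩, hl, key _ _ _ (fun h => by simp at h) ?_⟩
        intro z hz _
        have hz1 : phase n z.1 ≤ 1 := by
          rcases hz with hz | hz
          · exact (hle _ _ hz).trans hx1
          · rw [hz]; exact hx1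
        obtain ⟨z, hzU⟩ := z
        rcases z with _ | ⟨b', _ | k'⟩
        · simp [R]
        · simp [phase] at hz1
        · simp [R]
    · rcases x with _ | ⟨b, o⟩
      · simp [phase] at hx1
      · obtain ⟨hb, ho⟩ := hxU b o rfl
        have hpt := hptop b hb
        refine ⟨⟨_, htop b hb⟩, hlt _ _ ?_, key _ _ _ ?_ ?_⟩
        · show phase n (some (b, some (n - birth b))) < phase n (some (b, o))
          omega
        · intro h
          have h' := congrArg Subtype.val h
          simp only at h'
          rw [← h'] at hx1
          omega
        · rintro ⟨z, hzU⟩ _ hR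
          have hbn := hXn b hb
          rcases z with _ | ⟨b', o'⟩
          · simp [R]
          · obtain ⟨hb', ho'⟩ := hzU b' o' rfl
            have hbn' := hXn b' hb'
            rcases o with _ | k <;> rcases o' with _ | k' <;> simp only [R] at hR ⊢
            · exact ⟨hR, by omega⟩
            · exact ⟨hR.1, hR.2, by omega⟩
            · exact ⟨hR.1, by omega⟩
            · exact ⟨hR.1, hR.2.1, by omega⟩

/-- The return points. -/
def F (j : Fin 3) : V := some (Sum.inl j, none)

/-- The ray. -/
def ray (t : ℕ) : V := some (Sum.inr t, none)

/-- A cop at `c`, with robber at `r` to move: position acceptable for the robber. -/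
def P (c r : V) : Prop :=
  c ≠ r ∧ ((∃ j, r = F j) ∨ ∃ t, r = ray t ∧ ∀ b o, c = some (b, o) →
    (∀ j : Fin 3, b = Sum.inl j → t % 3 = j.val → 0 < t) ∧
    (∀ s, b = Sum.inr s → s % 3 = t % 3 → s < t))

/-- Position with the cop to move, acceptable for the robber. -/
def Q (c r : V) : Prop := ∀ c', R c c' → P c' r

/-- Rank of a robber position. -/
def rk : V → ℕ
  | some (Sum.inr t, none) => t + 1
  | _ => 0

lemma Q_F {c : V} {j : Fin 3} (h : ¬ R c (F j)) : Q c (F j) := by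
  intro c' hc'
  exact ⟨fun e => h (e ▸ hc'), Or.inl ⟨j, rfl⟩⟩

lemma step {c r : V} (h : P c r) :
    ∃ r', R r r' ∧ Q c r' ∧ (0 < rk r → rk r' < rk r) := by
  obtain ⟨hne, ⟨j, rfl⟩ | ⟨t, rfl, ht⟩⟩ := h
  · by_cases hR : R c (F j)
    · -- flee to the ray
      obtain ⟨N, hN⟩ : ∃ N : ℕ, ∀ b o, c = some (b, o) → birth b < N ∧
          ∀ k, o = some k → birth b + k < N := by
        rcases c with _ | ⟨b, _ | k⟩
        · exact ⟨0, by simp⟩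
        · refine ⟨birth b + 1, ?_⟩
          rintro b' o h
          simp only [Option.some.injEq, Prod.mk.injEq] at h
          obtain ⟨rfl, rfl⟩ := h
          simp
        · refine ⟨birth b + k + 1, ?_⟩
          rintro b' o h
          simp only [Option.some.injEq, Prod.mk.injEq] at h
          obtain ⟨rfl, rfl⟩ := h
          refine ⟨by omega, ?_⟩
          rintro k' h
          simp only [Option.some.injEq] at h
          omega
      have hj := j.isLt
      refine ⟨ray (3 * (N + 1) + j.val), ?_, ?_, ?_⟩
      · simp only [F, ray, R, BA]; omega
      · rcases c with _ | ⟨b, o⟩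
        · simp [R, F] at hR
        obtain ⟨h1, h2⟩ := hN b o rfl
        intro c' hc'
        have hbF : BA b (Sum.inl j) := by
          rcases o with _ | k <;> simp only [R, F] at hR
          · exact hR
          · exact hR.1
        refine ⟨?_, Or.inr ⟨_, rfl, ?_⟩⟩
        · rintro rfl
          rcases o with _ | k
          · rcases b with i | s
            · simp only [BA] at hbF
              subst hbF
              exact hne rfl
            · simp only [R, ray, BA, birth] at hc' h1
              omega
          · have h3 := h2 k rfl
            have h4 := hc'.2
            change 3 * (N + 1) + j.val ≤ birth b + k at h4
            omega
        · rintro b' o' rfl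
          refine ⟨fun _ _ _ => by omega, ?_⟩
          rintro s rfl hs
          rcases b with i | s'
          · simp only [BA] at hbF
            subst hbF
            rcases o with _ | k
            · exact absurd rfl hne
            · have := h2 k rfl
              rcases o' with _ | k' <;> simp only [R, birth] at hc' this <;> omega
          · simp only [birth] at h1
            rcases o with _ | k <;> rcases o' with _ | k' <;> simp only [R, BA] at hc' <;> omega
      · intro h; simp [rk, F] at h
    · exact ⟨F j, R_refl _, Q_F hR, fun h => by simp [rk, F] at h⟩
  · let j : Fin 3 := ⟨t % 3, Nat.mod_lt _ (by norm_num)⟩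
    by_cases hR : R c (F j)
    · rcases c with _ | ⟨b, o⟩
      · simp [R, F] at hR
      have hbF : BA b (Sum.inl j) := by
        rcases o with _ | k <;> simp only [R, F] at hR
        · exact hR
        · exact hR.1
      obtain ⟨h1, h2⟩ := ht b o rfl
      have ht0 : 0 < t := by
        rcases b with i | s
        · simp only [BA] at hbF
          exact h1 j (by rw [hbF]) rfl
        · simp only [BA] at hbF
          have := h2 s rfl hbF
          omega
      refine ⟨ray (t - 1), ?_, ?_, ?_⟩
      · simp only [ray, R, BA]; omega
      · intro c' hc'
        have hB : ∀ b' o', c' = some (b', o') → BA b b' := by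
          rintro b' o' rfl
          rcases o with _ | k <;> rcases o' with _ | k' <;> simp only [R] at hc'
          · exact hc'
          all_goals exact hc'.1
        refine ⟨?_, Or.inr ⟨_, rfl, ?_⟩⟩
        · intro e
          have := hB _ _ e
          rcases b with i | s
          · simp only [BA] at hbF this
            subst hbF
            simp only [j] at this
            omega
          · simp only [BA] at hbF this
            have h3 := h2 s rfl hbF
            simp only [j] at hbF
            omega
        · rintro b' o' e
          have hbb := hB _ _ e
          refine ⟨?_, ?_⟩
          · rintro i rfl hi
            exfalso
            rcases b with i' | s
            · simp only [BA] at hbF hbb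
              subst hbF
              subst hbb
              simp only [j] at hi
              omega
            · simp only [BA, j] at hbF hbb
              omega
          · rintro s rfl hs
            rcases b with i' | s'
            · simp only [BA] at hbF hbb
              subst hbF
              simp only [j] at hbb
              omega
            · simp only [BA] at hbF hbb
              have h3 := h2 s' rfl hbF
              simp only [j] at hbF
              omega
      · intro _; simp only [rk, ray]; omega
    · exact ⟨F j, by simp [R, ray, F, BA, j], Q_F hR, fun _ => by simp [rk, F, ray]⟩

lemma start (c : V) : ∃ r, Q c r := by
  by_contra! h
  have h0 : R c (F 0) := by
    by_contra hh; exact h _ (Q_F hh)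
  have h1 : R c (F 1) := by
    by_contra hh; exact h _ (Q_F hh)
  rcases c with _ | ⟨b | t, _ | k⟩ <;> simp [R, F, BA] at h0 h1 <;> omega

lemma Q_form {c r : V} (h : Q c r) (hr : rk r = 0) : ∃ j, r = F j := by
  obtain ⟨_, h | ⟨t, rfl, _⟩⟩ := h c (R_refl c)
  · exact h
  · simp [rk, ray] at hr

open Classical in
/-- The robber's reply. -/
noncomputable def next (c r : V) : V :=
  if h : ∃ r', R r r' ∧ Q c r' ∧ (0 < rk r → rk r' < rk r) then h.choose else r

lemma next_spec {c r : V} (h : P c r) :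
    R r (next c r) ∧ Q c (next c r) ∧ (0 < rk r → rk (next c r) < rk r) := by
  have hs := step h
  unfold next
  rw [dif_pos hs]
  exact hs.choose_spec

/-- History and current position of the robber. -/
noncomputable def play (σ : List V → V) : ℕ → List V × V
  | 0 => ([], (start (σ [])).choose)
  | n + 1 => ((play σ n).1 ++ [(play σ n).2],
      next (σ ((play σ n).1 ++ [(play σ n).2])) (play σ n).2)

lemma play_hist (σ : List V → V) (n : ℕ) :
    List.ofFn (fun i : Fin n => (play σ i.val).2) = (play σ n).1 := by
  induction n with
  | zero => simp [play]
  | succ n ih =>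
    rw [List.ofFn_succ', List.concat_eq_append]
    simp only [Fin.val_castSucc, Fin.val_last, ih]
    rfl

lemma not_weakCopWin : ¬ WeakCopWin G := by
  rintro ⟨σ, hσ, hwin⟩
  let r : ℕ → V := fun n => (play σ n).2
  have hcop : ∀ n, copPos σ r n = σ (play σ n).1 := fun n => by
    unfold copPos
    rw [← play_hist]
  have hmove : ∀ n, R (copPos σ r n) (copPos σ r (n + 1)) := by
    intro n
    rw [hcop, hcop]
    have := hσ (play σ (n + 1)).1 (by simp [play])
    have hd : (play σ (n + 1)).1.dropLast = (play σ n).1 := by simp [play]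
    rw [hd] at this
    exact closed_iff.1 this
  have hr : ∀ n, r (n + 1) = next (copPos σ r (n + 1)) (r n) := by
    intro n
    rw [hcop]
    rfl
  have hQ : ∀ n, Q (copPos σ r n) (r n) := by
    intro n
    induction n with
    | zero =>
      rw [hcop]
      exact (start (σ [])).choose_spec
    | succ n ih =>
      rw [hr]
      exact (next_spec (ih _ (hmove n))).2.1
  have hspec := fun n => next_spec (hQ n _ (hmove n))
  simp only [← hr] at hspec
  have hlegal : LegalRun G r := fun n => closed_iff.2 (hspec n).1
  rcases hwin r hlegal with ⟨n, h | h⟩ | hfin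
  · exact (hQ n _ (R_refl _)).1 h
  · exact (hQ n _ (hmove n)).1 h
  · have hU : (⋃ j : Fin 3, {n | r n = F j}).Finite := Set.finite_iUnion fun j => hfin _
    obtain ⟨N, hN⟩ := hU.bddAbove
    have hpos : ∀ n, N < n → 0 < rk (r n) := by
      intro n hn
      by_contra h0
      obtain ⟨j, hj⟩ := Q_form (hQ n) (by omega)
      have : n ≤ N := hN (Set.mem_iUnion.2 ⟨j, hj⟩)
      omega
    have hdec : ∀ k, rk (r (N + 1 + k)) + k ≤ rk (r (N + 1)) := by
      intro k
      induction k with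
      | zero => simp
      | succ k ih =>
        have := (hspec (N + 1 + k)).2.2 (hpos _ (by omega))
        have e : N + 1 + (k + 1) = N + 1 + k + 1 := by omega
        rw [e]
        omega
    have h1 := hdec (rk (r (N + 1)) + 1)
    omega

end LCGraph

theorem exists_locallyConstructible_not_weakCopWin :
    ∃ (V : Type) (G : SimpleGraph V),
      Countable V ∧ G.Connected ∧ LocallyConstructible G ∧ ¬ WeakCopWin G :=
  ⟨LCGraph.V, LCGraph.G, inferInstance, LCGraph.connected, LCGraph.locallyConstructible,
    LCGraph.not_weakCopWin⟩
end

section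
/- There exists a countable connected graph that is locally finite (every vertex has finite degree) and locally constructible, but is not a weak cop win. -/
universe u

namespace CR

def R (k : ℕ) : ℤ := 16 ^ (k + 1)

theorem R_succ (k : ℕ) : R (k + 1) = 16 * R k := by
  unfold R; ring

theorem R_pos (k : ℕ) : (k : ℤ) + 10 ≤ R k := by
  induction k with
  | zero => simp [R]
  | succ k ih => rw [R_succ]; push_cast; omega

theorem R_gap {l k : ℕ} (h : l < k) : 4 * R l + 4 * k + 10 ≤ R k := by
  induction k with
  | zero => omega
  | succ k ih =>
    rw [R_succ]
    have hk := R_pos k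
    rcases Nat.lt_succ_iff_lt_or_eq.1 h with h | h
    · have := ih h
      push_cast; omega
    · subst h
      push_cast; omega

theorem R_mono {l k : ℕ} (h : l ≤ k) : R l ≤ R k := by
  rcases Nat.lt_or_eq_of_le h with h | h
  · have := R_gap h
    have := R_pos l
    omega
  · rw [h]

@[ext] structure Vt where
  x : ℕ → ℤ
  i : ℕ
  h0 : x 0 = 1 ∨ x 0 = -1
  hb : ∀ k, -(R k + 1) ≤ x k ∧ x k ≤ R k + 1
  hz : ∀ k, i < k → x k = 0

def apex (x : ℕ → ℤ) (k : ℕ) : Prop := x k = R k + 1 ∨ x k = -(R k + 1)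

def Cl (a b : ℤ) : Prop := a ≤ b + 1 ∧ b ≤ a + 1

def A (x y : ℕ → ℤ) : Prop :=
  ∃ k0, (k0 = 0 ∨ apex x k0 ∨ apex y k0) ∧ ∀ l, k0 ≤ l → Cl (x l) (y l)

theorem A_refl (x : ℕ → ℤ) : A x x := ⟨0, Or.inl rfl, fun l _ => by unfold Cl; omega⟩

theorem A_symm {x y : ℕ → ℤ} (h : A x y) : A y x := by
  obtain ⟨k, h1, h2⟩ := h
  exact ⟨k, by tauto, fun l hl => by have := h2 l hl; unfold Cl at *; omega⟩

def N (v w : Vt) : Prop := v.i ≤ w.i + 1 ∧ w.i ≤ v.i + 1 ∧ A v.x w.x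

theorem N_refl (v : Vt) : N v v := ⟨by omega, by omega, A_refl _⟩

theorem N_symm {v w : Vt} (h : N v w) : N w v := ⟨h.2.1, h.1, A_symm h.2.2⟩

def G : SimpleGraph Vt where
  Adj v w := v ≠ w ∧ N v w
  symm := ⟨fun _ _ h => ⟨h.1.symm, N_symm h.2⟩⟩
  loopless := ⟨fun _ h => h.1 rfl⟩

theorem N_iff (v w : Vt) : (w = v ∨ G.Adj v w) ↔ N v w := by
  constructor
  · rintro (h | h)
    · rw [h]; exact N_refl _
    · exact h.2
  · intro h
    by_cases h' : w = v
    · exact Or.inl h'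
    · exact Or.inr ⟨fun e => h' e.symm, h⟩

theorem fin_level (n : ℕ) : {v : Vt | v.i ≤ n}.Finite := by
  let f : Vt → ℕ × (Fin (n + 1) → ℤ) := fun v => (v.i, fun k => v.x k)
  apply Set.Finite.of_finite_image (f := f)
  · apply Set.Finite.subset (s := (Set.Iic n) ×ˢ
      (Set.univ.pi fun k : Fin (n + 1) => Set.Icc (-(R k + 1)) (R k + 1)))
    · exact (Set.finite_Iic n).prod (Set.Finite.pi' fun k => Set.finite_Icc _ _) |>.subset (by
        rintro ⟨a, b⟩ ⟨h1, h2⟩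
        exact ⟨h1, fun k => h2 k trivial⟩)
    · rintro _ ⟨v, hv, rfl⟩
      exact ⟨hv, fun k _ => ⟨(v.hb k).1, (v.hb k).2⟩⟩
  · intro v hv w hw h
    have h1 : v.i = w.i := congrArg Prod.fst h
    have h2 : (fun k : Fin (n + 1) => v.x k) = fun k : Fin (n + 1) => w.x k := congrArg Prod.snd h
    simp only [Set.mem_ofPred_eq] at hv hw
    ext k
    · by_cases hk : k < n + 1
      · exact congrFun h2 ⟨k, hk⟩
      · rw [v.hz k (by omega), w.hz k (by omega)]
    · exact h1

instance : Countable Vt := by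
  rw [← Set.countable_univ_iff]
  have : (Set.univ : Set Vt) = ⋃ n, {v : Vt | v.i ≤ n} := by
    ext v; simp only [Set.mem_univ, Set.mem_iUnion, true_iff]; exact ⟨v.i, le_refl v.i⟩
  rw [this]
  exact Set.countable_iUnion fun n => (fin_level n).countable

theorem loc_fin (v : Vt) : (G.neighborSet v).Finite :=
  (fin_level (v.i + 1)).subset fun w hw => (show G.Adj v w from hw).2.2.1

theorem constructible_of_rank {W : Type} [Countable W] (H : SimpleGraph W) (ρ : W → ℕ) (root : W)
    (hr : ∀ v, v ≠ root → ρ root < ρ v)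
    (hd : ∀ v, v ≠ root → ∃ y, ρ y < ρ v ∧ ∀ z, ρ z ≤ ρ v →
      (z = v ∨ H.Adj v z) → (z = y ∨ H.Adj y z)) : Constructible H := by
  obtain ⟨e, he⟩ := exists_injective_nat W
  let f : W → ℕ ×ₗ ℕ := fun a => toLex (ρ a, e a)
  have hf : Function.Injective f := by
    intro a b h
    have : (ρ a, e a) = (ρ b, e b) := toLex.injective h
    exact he (Prod.ext_iff.1 this).2
  let r : W → W → Prop := fun a b => f a < f b
  have hle : ∀ a b, r a b → ρ a ≤ ρ b := by
    intro a b h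
    rcases Prod.Lex.lt_iff.1 h with h | h
    · exact le_of_lt h
    · exact le_of_eq h.1
  have hlt : ∀ a b, ρ a < ρ b → r a b := fun a b h => Prod.Lex.lt_iff.2 (Or.inl h)
  refine ⟨r, ?_, ?_⟩
  · exact (RelEmbedding.preimage ⟨f, hf⟩ (· < ·)).isWellOrder
  · intro v ⟨u, hu⟩
    have hv : v ≠ root := by
      rintro rfl
      by_cases h : u = v
      · subst h; exact lt_irrefl _ hu
      · have := hr u h
        have := hle _ _ hu
        omega
    obtain ⟨y, hy, hdom⟩ := hd v hv
    refine ⟨y, hlt _ _ hy, ?_, ?_⟩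
    · rintro rfl; omega
    · rintro z (hz | hz) hz'
      · exact hdom z (hle _ _ hz) hz'
      · exact hdom z (by rw [hz]) hz'

/-- The finite exhausting sets. -/
def U (m : ℕ) : Set Vt := {v | v.i ≤ m ∨ (v.i = m + 1 ∧ 0 ≤ v.x (m + 1))}

theorem U_fin (m : ℕ) : (U m).Finite := (fin_level (m + 1)).subset fun v hv => by
  simp only [U, Set.mem_ofPred_eq] at *; omega

def root (m : ℕ) : Vt where
  x k := if k = 0 then 1 else if k = m + 1 then R k + 1 else 0
  i := m + 1
  h0 := by simp
  hb k := by
    have := R_pos k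
    split_ifs <;> omega
  hz k hk := by
    rw [if_neg (by omega), if_neg (by omega)]

open Classical in
noncomputable def rho (m : ℕ) (v : Vt) : ℕ :=
  if v = root m then 0 else
  if v.i ≤ m then (R (m + 1)).toNat + 3 + (m + 1 - v.i)
  else (R (m + 1) + 2 - v.x (m + 1)).toNat

def up (v : Vt) : Vt where
  x := v.x
  i := v.i + 1
  h0 := v.h0
  hb := v.hb
  hz k hk := v.hz k (by omega)

def setc (v : Vt) (p : ℕ) (a : ℤ) (hp : 1 ≤ p) (hi : p ≤ v.i) (ha : -(R p + 1) ≤ a ∧ a ≤ R p + 1) :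
    Vt where
  x k := if k = p then a else v.x k
  i := v.i
  h0 := by rw [if_neg (by omega)]; exact v.h0
  hb k := by
    split_ifs with h
    · subst h; exact ha
    · exact v.hb k
  hz k hk := by
    rw [if_neg (by omega)]; exact v.hz k hk

theorem root_i (m : ℕ) : (root m).i = m + 1 := rfl
theorem root_x (m : ℕ) : (root m).x (m + 1) = R (m + 1) + 1 := by simp [root]
theorem root_xz (m k : ℕ) (h : m + 1 < k) : (root m).x k = 0 := (root m).hz k h

theorem rho_dom (m : ℕ) (v : Vt) (hv : v ∈ U m) (hne : v ≠ root m) :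
    ∃ y ∈ U m, rho m y < rho m v ∧ ∀ z ∈ U m, rho m z ≤ rho m v → N v z → N y z := by
  have hR := R_pos (m + 1)
  simp only [U, Set.mem_ofPred_eq] at hv ⊢
  by_cases hi : v.i ≤ m
  · refine ⟨up v, ?_, ?_, ?_⟩
    · simp only [up]
      by_cases h : v.i + 1 ≤ m
      · exact Or.inl h
      · right
        refine ⟨by omega, ?_⟩
        rw [v.hz _ (by omega)]
    · have : v.x (m + 1) = 0 := v.hz _ (by omega)
      have e1 : (up v).i = v.i + 1 := rfl
      have e2 : (up v).x = v.x := rfl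
      unfold rho
      rw [if_neg hne, if_pos hi, e1, e2]
      split_ifs <;> omega
    · intro z hz hr hN
      refine ⟨?_, ?_, hN.2.2⟩
      · have h1 := hN.1
        have h2 := hN.2.1
        simp only [up]
        simp only [rho, if_neg hne, if_pos hi] at hr
        by_cases hzr : z = root m
        · have := root_i m
          rw [hzr]; omega
        · rw [if_neg hzr] at hr
          split_ifs at hr <;> omega
      · have := hN.2.1; simp only [up]; omega
  · have hi' : v.i = m + 1 := by omega
    have ht : 0 ≤ v.x (m + 1) := by rcases hv with h | h; omega; exact h.2
    have hb := v.hb (m + 1)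
    have key : ∀ z, (z.i ≤ m ∨ (z.i = m + 1 ∧ 0 ≤ z.x (m + 1))) → rho m z ≤ rho m v →
        z.i = m + 1 ∧ v.x (m + 1) ≤ z.x (m + 1) := by
      intro z hz hr
      simp only [rho, if_neg hne, if_neg hi] at hr
      by_cases hzr : z = root m
      · have h1 := root_i m
        have h2 := root_x m
        rw [hzr]; omega
      · rw [if_neg hzr] at hr
        have := z.hb (m + 1)
        split_ifs at hr <;> omega
    have hk : ∀ z : Vt, z.i = m + 1 → N v z → ∃ k0, k0 ≤ m + 1 ∧
        (k0 = 0 ∨ apex v.x k0 ∨ apex z.x k0) ∧ ∀ l, k0 ≤ l → Cl (v.x l) (z.x l) := by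
      intro z hz hN
      obtain ⟨k0, h1, h2⟩ := hN.2.2
      refine ⟨k0, ?_, h1, h2⟩
      by_contra hlt
      have e1 := v.hz k0 (by omega)
      have e2 := z.hz k0 (by omega)
      have := R_pos k0
      unfold apex at h1
      omega
    by_cases hlt : v.x (m + 1) < R (m + 1)
    · refine ⟨setc v (m + 1) (v.x (m + 1) + 1) (by omega) (by omega) (by omega), ?_, ?_, ?_⟩
      · right; simp [setc]; omega
      · have gen : ∀ w : Vt, w.i = v.i → w.x (m + 1) = v.x (m + 1) + 1 → rho m w < rho m v := by
          intro w e1 e2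
          unfold rho
          rw [if_neg hne, if_neg hi, e1, e2, if_neg hi]
          split_ifs <;> omega
        exact gen _ rfl (if_pos rfl)
      · intro z hz hr hN
        obtain ⟨hz1, hz2⟩ := key z hz hr
        obtain ⟨k0, h1, h2, h3⟩ := hk z hz1 hN
        refine ⟨by simp [setc]; omega, by simp [setc]; omega, k0, ?_, ?_⟩
        · have h4 := h3 (m + 1) h1
          have hne : k0 ≠ m + 1 := by
            rintro rfl
            unfold apex at h2; unfold Cl at h4; omega
          simp only [apex, setc, if_neg hne] at *
          exact h2
        · intro l hl
          have h4 := h3 l hl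
          simp only [setc, Cl] at *
          split_ifs with h
          · subst h; omega
          · exact h4
    · refine ⟨root m, ?_, ?_, ?_⟩
      · right; have := root_x m; exact ⟨root_i m, by omega⟩
      · simp only [rho, if_neg hne, if_neg hi, if_true]
        omega
      · intro z hz hr hN
        obtain ⟨hz1, hz2⟩ := key z hz hr
        have h1 := root_i m
        have h2 := root_x m
        have h3 := z.hb (m + 1)
        refine ⟨by omega, by omega, m + 1, Or.inr (Or.inl (Or.inl h2)), ?_⟩
        intro l hl
        rcases Nat.lt_or_eq_of_le hl with h | h
        · have := z.hz l (by omega)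
          have := root_xz m l h
          unfold Cl; omega
        · subst h; unfold Cl; omega

theorem root_mem (m : ℕ) : root m ∈ U m := by
  right; have := root_x m; have := R_pos (m+1); exact ⟨root_i m, by omega⟩

theorem rho_root (m : ℕ) (v : Vt) (hne : v ≠ root m) : rho m (root m) < rho m v := by
  have := v.hb (m + 1)
  simp only [rho, if_neg hne, if_true]
  split_ifs <;> omega

theorem mem_U {v : Vt} {m : ℕ} (h : v.i ≤ m) : v ∈ U m := Or.inl h

theorem loc_con : LocallyConstructible G := by
  intro S hS
  obtain ⟨m, hm⟩ := (hS.image (fun v : Vt => v.i)).bddAbove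
  refine ⟨U m, fun v hv => mem_U (hm ⟨v, hv, rfl⟩), U_fin m, ?_⟩
  refine constructible_of_rank _ (fun v => rho m v.1) ⟨root m, root_mem m⟩ ?_ ?_
  · intro v hv
    exact rho_root m v.1 fun h => hv (Subtype.ext h)
  · intro v hv
    obtain ⟨y, hy, h1, h2⟩ := rho_dom m v.1 v.2 fun h => hv (Subtype.ext h)
    refine ⟨⟨y, hy⟩, h1, ?_⟩
    intro z hz hz'
    have h3 := h2 z.1 z.2 hz (by
      rw [← N_iff]
      rcases hz' with h | h
      · left; rw [h]
      · right; exact h)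
    rw [← N_iff] at h3
    rcases h3 with h | h
    · left; exact Subtype.ext h
    · right; exact h

theorem reach_root (m n : ℕ) : ∀ v ∈ U m, rho m v ≤ n → G.Reachable v (root m) := by
  induction n with
  | zero =>
    intro v hv hn
    by_cases h : v = root m
    · rw [h]
    · have := rho_root m v h; omega
  | succ n ih =>
    intro v hv hn
    by_cases h : v = root m
    · rw [h]
    · obtain ⟨y, hy, h1, h2⟩ := rho_dom m v hv h
      have h3 := h2 v hv le_rfl (N_refl v)
      rw [← N_iff] at h3
      rcases h3 with h3 | h3
      · rw [h3] at h1; omega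
      · exact (h3.symm.reachable).trans (ih y hy (by omega))

theorem conn : G.Connected := by
  have : Nonempty Vt := ⟨root 0⟩
  refine ⟨fun v w => ?_⟩
  exact (reach_root (max v.i w.i) _ v (mem_U (le_max_left _ _)) le_rfl).trans
    (reach_root (max v.i w.i) _ w (mem_U (le_max_right _ _)) le_rfl).symm

/-- Robber invariants. -/
def InvM (p : ℕ) (v c : Vt) : Prop :=
  1 ≤ p ∧ v.i = p ∧ (∀ k, k < p → v.x k = -c.x k) ∧ (-R p ≤ v.x p ∧ v.x p ≤ R p) ∧
  (-R p ≤ c.x p ∧ c.x p ≤ R p) ∧ ∀ k, p < k → (2 * c.x k ≤ R k ∧ -(2 * c.x k) ≤ R k)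

def InvF (p : ℕ) (s : ℤ) (v c : Vt) : Prop :=
  1 ≤ p ∧ (s = 1 ∨ s = -1) ∧ v.i ≤ p ∧ 2 ≤ s * (c.x p - v.x p) - ((p : ℤ) - v.i) ∧
  ∀ k, p < k → (c.x k + ((p : ℤ) - v.i) + (R p + 1 + s * v.x p) ≤ R k - 1 ∧
    -c.x k + ((p : ℤ) - v.i) + (R p + 1 + s * v.x p) ≤ R k - 1)

def InvH (p q : ℕ) (s : ℤ) (n : ℕ) (v c : Vt) : Prop :=
  1 ≤ p ∧ p < q ∧ (s = 1 ∨ s = -1) ∧ v.i ≤ p ∧ 0 < n + v.i ∧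
  (∀ k, 1 ≤ k → (v.x k ≤ n ∧ -v.x k ≤ n)) ∧ 2 + (n : ℤ) + v.i + q ≤ s * c.x q ∧
  ∀ k, q < k → (c.x k + n + v.i + q + R q + 1 ≤ R k - 1 ∧
    -c.x k + n + v.i + q + R q + 1 ≤ R k - 1)

def Inv (p : ℕ) (v c : Vt) : Prop :=
  InvM p v c ∨ (∃ s, InvF p s v c) ∨ ∃ q s n, InvH p q s n v c

theorem Inv_level {p : ℕ} {v c : Vt} (h : Inv p v c) : v.i ≤ p := by
  rcases h with h | ⟨s, h⟩ | ⟨q, s, n, h⟩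
  · exact le_of_eq h.2.1
  · exact h.2.2.1
  · exact h.2.2.2.1

theorem safe1 {v c : Vt} (l : ℕ) (hd : ¬ Cl (v.x l) (c.x l)) (hv : ∀ k, l < k → ¬ apex v.x k)
    (hc : ∀ k, l < k → ¬ apex c.x k) : ¬ N c v := by
  rintro ⟨-, -, k0, h1, h2⟩
  by_cases h : k0 ≤ l
  · have := h2 l h
    unfold Cl at *; omega
  · rcases h1 with h1 | h1 | h1
    · omega
    · exact hc k0 (by omega) h1
    · exact hv k0 (by omega) h1

theorem not_apex_of {x : ℕ → ℤ} {k : ℕ} (h1 : x k ≤ R k) (h2 : -x k ≤ R k) : ¬ apex x k := by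
  unfold apex; omega

theorem Inv_safe {p : ℕ} {v c : Vt} (h : Inv p v c) : ¬ N c v := by
  rcases h with h | ⟨s, h⟩ | ⟨q, s, n, h⟩
  · obtain ⟨hp, hi, hm, hx, hy, hb⟩ := h
    rintro ⟨-, -, k0, h1, h2⟩
    have h3 := h2 k0 le_rfl
    have hR := R_pos k0
    unfold Cl at h3
    rcases lt_trichotomy k0 p with hk | hk | hk
    · have h4 := hm k0 hk
      unfold apex at h1
      rcases h1 with h1 | h1
      · subst h1
        have := c.h0
        omega
      · omega
    · subst hk; unfold apex at h1; omega
    · have h4 := hb k0 hk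
      have h5 := v.hz k0 (by omega)
      unfold apex at h1; omega
  · obtain ⟨hp, hs, hi, hd, hb⟩ := h
    have hvp := v.hb p
    apply safe1 p
    · unfold Cl; rcases hs with rfl | rfl <;> omega
    · intro k hk
      have h5 := v.hz k (by omega)
      have hR := R_pos k
      unfold apex; omega
    · intro k hk
      have h4 := hb k hk
      apply not_apex_of <;> rcases hs with rfl | rfl <;> omega
  · obtain ⟨hp, hq, hs, hi, hn, hN, hd, hb⟩ := h
    have h5 := v.hz q (by omega)
    have hR := R_pos q
    apply safe1 q
    · unfold Cl; rcases hs with rfl | rfl <;> omega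
    · intro k hk
      have h5 := v.hz k (by omega)
      have hR := R_pos k
      unfold apex; omega
    · intro k hk
      have h4 := hb k hk
      apply not_apex_of <;> omega

theorem cop_move {c c' : Vt} (hN : N c c') (l : ℕ)
    (hb : ∀ k, l < k → c.x k ≤ R k - 1 ∧ -c.x k ≤ R k - 1) :
    ∀ k, l ≤ k → Cl (c.x k) (c'.x k) := by
  obtain ⟨-, -, k0, h1, h2⟩ := hN
  intro k hk
  apply h2
  by_contra hlt
  have h3 := hb k0 (by omega)
  have h4 := h2 k0 le_rfl
  unfold apex at h1; unfold Cl at h4; omega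

/-- mirror move -/
def mir (v c : Vt) (p : ℕ) (a : ℤ) (hp : 1 ≤ p) (hi : v.i = p) (ha : -R p ≤ a ∧ a ≤ R p) : Vt where
  x k := if k < p then -c.x k else if k = p then a else 0
  i := v.i
  h0 := by
    rw [if_pos (by omega)]
    have := c.h0; omega
  hb k := by
    have := c.hb k
    have := R_pos k
    split_ifs with h h'
    · omega
    · subst h'; omega
    · omega
  hz k hk := by rw [if_neg (by omega), if_neg (by omega)]

def shr (v : Vt) : Vt where
  x k := if k = 0 then v.x k else if 0 < v.x k then v.x k - 1 else if v.x k < 0 then v.x k + 1 else 0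
  i := v.i
  h0 := by rw [if_pos rfl]; exact v.h0
  hb k := by
    have := v.hb k
    have := R_pos k
    split_ifs <;> omega
  hz k hk := by
    have := v.hz k hk
    split_ifs <;> omega

def low (v : Vt) (h : ∀ k, 1 ≤ k → v.x k = 0) : Vt where
  x := v.x
  i := v.i - 1
  h0 := v.h0
  hb := v.hb
  hz k hk := h k (by omega)

def alarm (p : ℕ) (c : Vt) : Prop := ∃ k, p < k ∧ (R k < 2 * c.x k ∨ R k < -(2 * c.x k))

theorem alarm_H {p : ℕ} {v c : Vt} (hp : 1 ≤ p) (hi : v.i = p) (h : alarm p c) : Inv p v c := by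
  classical
  right; right
  obtain ⟨k, hk, hk'⟩ := h
  let P : ℕ → Prop := fun k => p < k ∧ (R k < 2 * c.x k ∨ R k < -(2 * c.x k))
  have hbd : ∀ k, P k → k ≤ c.i := by
    intro k hk
    by_contra hlt
    have := c.hz k (by omega)
    have := R_pos k
    have := hk.2
    omega
  have hq : P (Nat.findGreatest P c.i) := Nat.findGreatest_spec (hbd k ⟨hk, hk'⟩) ⟨hk, hk'⟩
  have hmax : ∀ j, Nat.findGreatest P c.i < j → ¬ P j := fun j hj hPj =>
    Nat.findGreatest_is_greatest hj (hbd j hPj) hPj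
  generalize Nat.findGreatest P c.i = q at hq hmax
  obtain ⟨hpq, hq⟩ := hq
  have hRp := R_pos p
  have hg := R_gap hpq
  have hn : (((R p + 1).toNat : ℕ) : ℤ) = R p + 1 := by omega
  refine ⟨q, if 0 < c.x q then 1 else -1, (R p + 1).toNat, hp, hpq, ?_, by omega, by omega, ?_, ?_, ?_⟩
  · split_ifs <;> simp
  · intro k hk
    rw [hn]
    by_cases hkp : k ≤ p
    · have := R_mono hkp
      have := v.hb k
      omega
    · have := v.hz k (by omega)
      omega
  · rw [hn]
    split_ifs <;> omega
  · intro k hk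
    have h1 := hmax k hk
    have h2 := R_gap hk
    have h3 : ¬ (R k < 2 * c.x k ∨ R k < -(2 * c.x k)) := fun h => h1 ⟨by omega, h⟩
    rw [hn]
    omega

theorem step_H {p q : ℕ} {s : ℤ} {n : ℕ} {v c c' : Vt} (h : InvH p q s n v c) (hN : N c c') :
    ∃ p' v', Inv p' v' c' ∧ N v v' ∧ (p' = p ∨ v'.i = 0) := by
  obtain ⟨hp, hq, hs, hi, hn, hx, hd, hb⟩ := h
  have hRq := R_pos q
  have hcm := cop_move hN q (fun k hk => by have := hb k hk; omega)
  -- it suffices to give a vertex and bound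
  have key : ∀ (v' : Vt) (n' : ℕ), v'.i ≤ p → n' + v'.i + 1 = n + v.i →
      (∀ k, 1 ≤ k → (v'.x k ≤ n' ∧ -v'.x k ≤ n')) → N v v' →
      ∃ p' v', Inv p' v' c' ∧ N v v' ∧ (p' = p ∨ v'.i = 0) := by
    intro v' n' h1 h2 h3 h4
    have hdq := hcm q le_rfl
    unfold Cl at hdq
    by_cases h0 : n' + v'.i = 0
    · refine ⟨q, v', Or.inr (Or.inl ⟨s, by omega, hs, by omega, ?_, ?_⟩), h4, Or.inr (by omega)⟩
      · have := v'.hz q (by omega)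
        rcases hs with rfl | rfl <;> omega
      · intro k hk
        have := v'.hz q (by omega)
        have h6 := hb k hk
        have h7 := hcm k (by omega)
        unfold Cl at h7
        rcases hs with rfl | rfl <;> omega
    · refine ⟨p, v', Or.inr (Or.inr ⟨q, s, n', hp, hq, hs, h1, by omega, h3, ?_, ?_⟩), h4, Or.inl rfl⟩
      · rcases hs with rfl | rfl <;> omega
      · intro k hk
        have h6 := hb k hk
        have h7 := hcm k (by omega)
        unfold Cl at h7
        omega
  by_cases hn0 : n = 0
  · have hx0 : ∀ k, 1 ≤ k → v.x k = 0 := fun k hk => by have := hx k hk; omega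
    apply key (low v hx0) 0
    · simp only [low]; omega
    · simp only [low]; omega
    · intro k hk; simp only [low]; have := hx0 k hk; omega
    · exact ⟨by simp only [low]; omega, by simp only [low]; omega, A_refl _⟩
  · apply key (shr v) (n - 1)
    · exact hi
    · simp only [shr]; omega
    · intro k hk
      have := hx k hk
      simp only [shr]
      split_ifs <;> omega
    · refine ⟨by simp only [shr]; omega, by simp only [shr]; omega, 0, Or.inl rfl, ?_⟩
      intro l _
      simp only [shr, Cl]
      split_ifs <;> omega

theorem step_F {p : ℕ} {s : ℤ} {v c c' : Vt} (h : InvF p s v c) (hN : N c c') :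
    ∃ p' v', Inv p' v' c' ∧ N v v' ∧ (p' = p ∨ v'.i = 0) := by
  obtain ⟨hp, hs, hi, hd, hb⟩ := h
  have hRp := R_pos p
  have hvp := v.hb p
  have hcp := c'.hb p
  have hcm := cop_move hN p (fun k hk => by
    have := hb k hk; rcases hs with rfl | rfl <;> omega)
  have hdp := hcm p le_rfl
  unfold Cl at hdp
  by_cases hip : v.i < p
  · refine ⟨p, up v, Or.inr (Or.inl ⟨s, hp, hs, ?_, ?_, ?_⟩), ⟨?_, ?_, A_refl _⟩, Or.inl rfl⟩
    · simp only [up]; omega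
    · simp only [up]; push_cast; rcases hs with rfl | rfl <;> omega
    · intro k hk
      have h6 := hb k hk
      have h7 := hcm k (by omega)
      unfold Cl at h7
      simp only [up]; push_cast; rcases hs with rfl | rfl <;> omega
    · simp only [up]; omega
    · simp only [up]; omega
  have hip' : v.i = p := by omega
  by_cases hend : -(R p + 1) < s * v.x p
  · refine ⟨p, setc v p (v.x p - s) hp (by omega) (by rcases hs with rfl | rfl <;> omega),
      Or.inr (Or.inl ⟨s, hp, hs, ?_, ?_, ?_⟩), ⟨?_, ?_, 0, Or.inl rfl, ?_⟩, Or.inl rfl⟩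
    · simp only [setc]; omega
    · simp only [setc, if_true]; rcases hs with rfl | rfl <;> omega
    · intro k hk
      have h6 := hb k hk
      have h7 := hcm k (by omega)
      unfold Cl at h7
      simp only [setc, if_true]; rcases hs with rfl | rfl <;> omega
    · simp only [setc]; omega
    · simp only [setc]; omega
    · intro l _
      simp only [setc, Cl]
      split_ifs with h
      · subst h; rcases hs with rfl | rfl <;> omega
      · omega
  by_cases hal : alarm p c'
  · exact ⟨p, v, alarm_H hp hip' hal, N_refl v, Or.inl rfl⟩
  have hal' : ∀ k, p < k → (2 * c'.x k ≤ R k ∧ -(2 * c'.x k) ≤ R k) := by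
    intro k hk
    by_contra hc
    exact hal ⟨k, hk, by omega⟩
  by_cases hap : c'.x p = s * (R p + 1)
  · refine ⟨p, v, Or.inr (Or.inl ⟨s, hp, hs, hi, ?_, ?_⟩), N_refl v, Or.inl rfl⟩
    · rcases hs with rfl | rfl <;> omega
    · intro k hk
      have h6 := hal' k hk
      have h7 := R_gap hk
      rcases hs with rfl | rfl <;> omega
  · refine ⟨p, mir v c' p (-(s * R p)) hp hip' (by rcases hs with rfl | rfl <;> omega),
      Or.inl ⟨hp, hip', ?_, ?_, ?_, hal'⟩, ⟨?_, ?_, p, Or.inr (Or.inl ?_), ?_⟩, Or.inl rfl⟩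
    · intro k hk
      simp only [mir, if_pos hk]
    · simp only [mir, lt_irrefl, if_true, if_false]; rcases hs with rfl | rfl <;> omega
    · rcases hs with rfl | rfl <;> omega
    · simp only [mir]; omega
    · simp only [mir]; omega
    · unfold apex; rcases hs with rfl | rfl <;> omega
    · intro l hl
      simp only [mir, Cl]
      rw [if_neg (by omega)]
      split_ifs with h
      · subst h; rcases hs with rfl | rfl <;> omega
      · have := v.hz l (by omega); omega

theorem step_M {p : ℕ} {v c c' : Vt} (h : InvM p v c) (hN : N c c') :
    ∃ p' v', Inv p' v' c' ∧ N v v' ∧ (p' = p ∨ v'.i = 0) := by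
  obtain ⟨hp, hi, hm, hx, hy, hb⟩ := h
  have hRp := R_pos p
  have hcp := c'.hb p
  by_cases hal : alarm p c'
  · exact ⟨p, v, alarm_H hp hi hal, N_refl v, Or.inl rfl⟩
  have hal' : ∀ k, p < k → (2 * c'.x k ≤ R k ∧ -(2 * c'.x k) ≤ R k) := by
    intro k hk
    by_contra hc
    exact hal ⟨k, hk, by omega⟩
  by_cases hin : -R p ≤ c'.x p ∧ c'.x p ≤ R p
  · refine ⟨p, mir v c' p (v.x p) hp hi hx,
      Or.inl ⟨hp, hi, ?_, ?_, hin, hal'⟩, ⟨?_, ?_, ?_⟩, Or.inl rfl⟩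
    · intro k hk
      simp only [mir, if_pos hk]
    · simp only [mir, lt_irrefl, if_true, if_false]; exact hx
    · simp only [mir]; omega
    · simp only [mir]; omega
    · obtain ⟨-, -, k0, h1, h2⟩ := hN
      have hk0 : k0 < p := by
        by_contra hge
        rcases Nat.lt_or_eq_of_le (not_lt.1 hge) with h | h
        · have := hb k0 h
          have := hal' k0 h
          have := R_pos k0
          unfold apex at h1; omega
        · subst h; unfold apex at h1; omega
      refine ⟨k0, ?_, ?_⟩
      · have := hm k0 hk0
        simp only [apex, mir, if_pos hk0] at *
        omega
      · intro l hl
        have h3 := h2 l hl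
        simp only [mir, Cl] at *
        split_ifs with h h'
        · have := hm l h; omega
        · subst h'; omega
        · have := v.hz l (by omega); omega
  · have : ∃ s : ℤ, (s = 1 ∨ s = -1) ∧ c'.x p = s * (R p + 1) := by
      by_cases h : c'.x p = R p + 1
      · exact ⟨1, Or.inl rfl, by omega⟩
      · exact ⟨-1, Or.inr rfl, by omega⟩
    obtain ⟨s, hs, hcs⟩ := this
    refine ⟨p, setc v p (v.x p - s) hp (by omega) (by rcases hs with rfl | rfl <;> omega),
      Or.inr (Or.inl ⟨s, hp, hs, ?_, ?_, ?_⟩), ⟨?_, ?_, 0, Or.inl rfl, ?_⟩, Or.inl rfl⟩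
    · simp only [setc]; omega
    · simp only [setc, if_true]; rcases hs with rfl | rfl <;> omega
    · intro k hk
      have h6 := hal' k hk
      have h7 := R_gap hk
      simp only [setc, if_true]; rcases hs with rfl | rfl <;> omega
    · simp only [setc]; omega
    · simp only [setc]; omega
    · intro l _
      simp only [setc, Cl]
      split_ifs with h
      · subst h; rcases hs with rfl | rfl <;> omega
      · omega

theorem step {p : ℕ} {v c c' : Vt} (h : Inv p v c) (hN : N c c') :
    ∃ p' v', Inv p' v' c' ∧ N v v' ∧ (p' = p ∨ v'.i = 0) := by
  rcases h with h | ⟨s, h⟩ | ⟨q, s, n, h⟩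
  · exact step_M h hN
  · exact step_F h hN
  · exact step_H h hN

theorem init (c : Vt) : ∃ p v, Inv p v c := by
  have hz := c.hz
  have hR := R_pos (c.i + 1)
  refine ⟨c.i + 1, ⟨fun k => -c.x k, c.i + 1, ?_, ?_, ?_⟩, Or.inl ⟨by omega, rfl, ?_, ?_, ?_, ?_⟩⟩
  · have := c.h0; omega
  · intro k; have := c.hb k; omega
  · intro k hk; have := hz k (by omega); omega
  · intro k _; rfl
  · have := hz (c.i + 1) (by omega); dsimp only; omega
  · have := hz (c.i + 1) (by omega); omega
  · intro k hk; have := hz k (by omega); have := R_pos k; omega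

theorem not_weak : ¬ WeakCopWin G := by
  rintro ⟨σ, hσ, hw⟩
  -- states: history (nonempty, last entry is the current robber position), phase
  let S := {t : List Vt × ℕ × Vt // Inv t.2.1 t.2.2 (σ t.1)}
  have hcop : ∀ (l : List Vt) (v : Vt), N (σ l) (σ (l ++ [v])) := by
    intro l v
    have := hσ (l ++ [v]) (by simp)
    rw [List.dropLast_concat, N_iff] at this
    exact this
  have hstep : ∀ t : S, ∃ t' : S, t'.1.1 = t.1.1 ++ [t.1.2.2] ∧ N t.1.2.2 t'.1.2.2 ∧
      (t'.1.2.1 = t.1.2.1 ∨ t'.1.2.2.i = 0) := by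
    rintro ⟨⟨l, p, v⟩, ht⟩
    obtain ⟨p', v', h1, h2, h3⟩ := step ht (hcop l v)
    exact ⟨⟨(l ++ [v], p', v'), h1⟩, rfl, h2, h3⟩
  choose f hf1 hf2 hf3 using hstep
  obtain ⟨p0, v0, h0⟩ := init (σ [])
  let st : ℕ → S := fun n => Nat.rec ⟨([], p0, v0), h0⟩ (fun _ t => f t) n
  have hst : ∀ n, st (n + 1) = f (st n) := fun n => rfl
  let r : ℕ → Vt := fun n => (st n).1.2.2
  let ph : ℕ → ℕ := fun n => (st n).1.2.1
  have hhist : ∀ n, (st n).1.1 = List.ofFn fun i : Fin n => r i.val := by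
    intro n
    induction n with
    | zero => rfl
    | succ n ih =>
      rw [hst, hf1, ih, List.ofFn_succ_last]
      rfl
  have hcp : ∀ n, copPos σ r n = σ (st n).1.1 := fun n => by rw [hhist]; rfl
  have hinv : ∀ n, Inv (ph n) (r n) (copPos σ r n) := fun n => by rw [hcp]; exact (st n).2
  have hN : ∀ n, N (r n) (r (n + 1)) := fun n => hf2 (st n)
  have hph : ∀ n, ph (n + 1) = ph n ∨ (r (n + 1)).i = 0 := fun n => hf3 (st n)
  have hfin : ∃ L, {n | (r n).i ≤ L}.Infinite := by
    by_cases h : {n | (r n).i ≤ 0}.Infinite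
    · exact ⟨0, h⟩
    · rw [Set.not_infinite] at h
      obtain ⟨b, hb⟩ := h.bddAbove
      have hconst : ∀ n, ph (b + n) = ph b := by
        intro n
        induction n with
        | zero => rfl
        | succ n ih =>
          rcases hph (b + n) with h | h
          · rw [← ih]; exact h
          · have : b + n + 1 ≤ b := hb (show (r (b + n + 1)).i ≤ 0 by omega)
            omega
      refine ⟨ph b, (Set.Ici_infinite b).mono ?_⟩
      intro n hn
      have hle := Inv_level (hinv n)
      obtain ⟨m, rfl⟩ := Nat.exists_eq_add_of_le (show b ≤ n from hn)
      rw [hconst] at hle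
      exact hle
  rcases hw r (fun n => (N_iff _ _).2 (hN n)) with ⟨n, hc⟩ | hv
  · have hs := Inv_safe (hinv n)
    rcases hc with hc | hc
    · rw [hc] at hs; exact hs (N_refl _)
    · apply hs
      rw [← hc, hcp, hcp, hst, hf1]
      exact hcop _ _
  · obtain ⟨L, hL⟩ := hfin
    apply hL
    have : {n | (r n).i ≤ L} = ⋃ v ∈ {v : Vt | v.i ≤ L}, {n | r n = v} := by
      ext n; simp
    rw [this]
    exact (fin_level L).biUnion fun v _ => hv v

end CR

theorem exists_locallyFinite_locallyConstructible_not_weakCopWin :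
    ∃ (V : Type) (G : SimpleGraph V),
      Countable V ∧ G.Connected ∧ (∀ v : V, (G.neighborSet v).Finite) ∧
      LocallyConstructible G ∧ ¬ WeakCopWin G :=
  ⟨CR.Vt, CR.G, inferInstance, CR.conn, CR.loc_fin, CR.loc_con, CR.not_weak⟩
end

section
/- For every countable ordinal λ with λ ≥ 1, there exists a countable constructible graph whose construction time is exactly λ. -/
universe u

/-- The set of ordinals arising as the order type of some construction order of `G`.
The construction time of `G` is the least element of this set. -/
def constructionTimes {V : Type u} (G : SimpleGraph V) : Set Ordinal.{u} :=
  {o | ∃ (r : V → V → Prop) (_ : IsWellOrder V r), ConstructionOrderSpec G r ∧ Ordinal.type r = o}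

namespace CT

open Ordinal

lemma mul3_lt {a b : Ordinal.{0}} (h : a < b) (c d : ℕ) (hc : c < 3) :
    3 * a + (c : Ordinal) < 3 * b + (d : Ordinal) := by
  have h1 : a + 1 ≤ b := Order.add_one_le_of_lt h
  have h2 : (3 : Ordinal) * (a + 1) ≤ 3 * b := mul_le_mul_right h1 3
  have h3 : (3 : Ordinal) * (a + 1) = 3 * a + 3 := by rw [mul_add, mul_one]
  have h4 : (c : Ordinal.{0}) < 3 := by exact_mod_cast hc
  calc 3 * a + (c : Ordinal) < 3 * a + 3 := by gcongr
    _ ≤ 3 * b := by rw [← h3]; exact h2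
    _ ≤ _ := le_self_add

lemma mul3_inj {a b : Ordinal.{0}} {c d : ℕ} (hc : c < 3) (hd : d < 3)
    (h : 3 * a + (c : Ordinal) = 3 * b + (d : Ordinal)) : a = b ∧ c = d := by
  have hab : a = b := by
    rcases lt_trichotomy a b with h1 | h1 | h1
    · exact absurd h (mul3_lt h1 c d hc).ne
    · exact h1
    · exact absurd h.symm (mul3_lt h1 d c hd).ne
  subst hab
  refine ⟨rfl, ?_⟩
  have := add_left_cancel h
  exact_mod_cast this

/-- index function -/
lemma exists_h (lam : Ordinal.{0}) (hl : ω ≤ lam) :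
    ∃ (mu : Ordinal.{0}) (h : Ordinal.{0} → Ordinal.{0}),
      mu ≤ lam ∧ (∀ a < lam, 0 < h a) ∧ (∀ a < lam, ∀ c < 3, 3 * h a + (c : ℕ) < mu) ∧
      (∀ a < lam, ∀ b < lam, h a = h b → a = b) ∧
      (∀ a b, a < b → b < mu → h a < h b) := by
  have hmod : lam % ω < ω := mod_lt _ omega0_ne_zero
  obtain ⟨n, hn⟩ := lt_omega0.1 hmod
  have hdiv : ω * (lam / ω) + lam % ω = lam := div_add_mod _ _
  set q := lam / ω with hq
  have hq0 : 1 ≤ q := by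
    rw [Order.one_le_iff_ne_zero]
    intro h0
    rw [h0, mul_zero, zero_add] at hdiv
    rw [hdiv] at hmod
    exact absurd hl (not_le.2 hmod)
  have hmu : ω ≤ ω * q := by
    simpa using mul_le_mul_right hq0 (ω : Ordinal.{0})
  have hmul : ω * q ≤ lam := by rw [← hdiv]; exact le_self_add
  have h3 : (3 : Ordinal.{0}) * (ω * q) = ω * q := by
    rw [← mul_assoc]
    have := natCast_mul_omega0 (n := 3) (by norm_num)
    rw [show (3 : Ordinal.{0}) = ((3 : ℕ) : Ordinal) by norm_num, this]
  rw [hn] at hdiv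
  set mu := ω * q with hmudef
  have hsub : ∀ a, a < lam → mu ≤ a → a - mu < n := by
    intro a ha hm
    rw [sub_lt_of_le hm, hdiv]; exact ha
  refine ⟨mu, fun a => if a < mu then ((1 + n : ℕ) : Ordinal) + a else 1 + (a - mu), hmul,
    ?_, ?_, ?_, ?_⟩
  · intro a ha
    dsimp only
    split_ifs
    · refine lt_of_lt_of_le ?_ le_self_add
      exact_mod_cast (by omega : 0 < 1 + n)
    · exact lt_of_lt_of_le zero_lt_one le_self_add
  · intro a ha c hc
    have key : ∀ b, b < mu → 3 * b + (c : Ordinal) < mu := by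
      intro b hb
      have := mul3_lt hb c 0 hc
      simpa [h3] using this
    apply key
    dsimp only
    split_ifs with h
    · calc ((1 + n : ℕ) : Ordinal) + a < ((1 + n : ℕ) : Ordinal) + mu := by gcongr
        _ = mu := natCast_add_of_omega0_le hmu _
    · have h1 := hsub a ha (not_lt.1 h)
      calc 1 + (a - mu) < 1 + (n : Ordinal) := by gcongr
        _ = ((1 + n : ℕ) : Ordinal) := by push_cast; rfl
        _ < ω := natCast_lt_omega0 _
        _ ≤ mu := hmu
  · intro a ha b hb hab
    have aux : ∀ a b, mu ≤ a → a < lam → 1 + (a - mu) ≠ ((1 + n : ℕ) : Ordinal) + b := by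
      intro a b h1 h2 he
      have h3 := hsub a h2 h1
      have h4 : 1 + (a - mu) < ((1 + n : ℕ) : Ordinal) := by
        push_cast; gcongr
      rw [he] at h4
      exact absurd h4 (not_lt.2 le_self_add)
    dsimp only at hab
    split_ifs at hab with h1 h2 h2
    · exact add_left_cancel hab
    · exact absurd hab.symm (aux _ _ (not_lt.1 h2) hb)
    · exact absurd hab (aux _ _ (not_lt.1 h1) ha)
    · have := add_left_cancel hab
      rw [← Ordinal.add_sub_cancel_of_le (not_lt.1 h1), this,
        Ordinal.add_sub_cancel_of_le (not_lt.1 h2)]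
  · intro a b hab hb
    simp only [hb, hab.trans hb, if_true]
    gcongr

inductive Vx (α : Type) : Type
  | w : Vx α
  | w' : Vx α
  | x : α → Vx α
  | z : α → Vx α
  | y : α → Vx α

open Vx

/-- adjacency, one direction -/
def rel {α : Type} (r : α → α → Prop) : Vx α → Vx α → Prop
  | w, w' => True
  | w, x _ => True
  | w, y _ => True
  | w', z _ => True
  | w', y _ => True
  | x _, x _ => True
  | z _, z _ => True
  | y _, y _ => True
  | x i, z j => i = j
  | y i, x j => i = j
  | y i, z k => k = i ∨ r k i
  | _, _ => False

def gr {α : Type} (r : α → α → Prop) : SimpleGraph (Vx α) := SimpleGraph.fromRel (rel r)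

lemma forced {α : Type} (r : α → α → Prop) [IsWellOrder α r]
    (s : Vx α → Vx α → Prop) [IsWellOrder (Vx α) s] (hs : ConstructionOrderSpec (gr r) s) :
    type r ≤ type s := by
  classical
  have tri : ∀ a b, a ≠ b → s a b ∨ s b a := by
    intro a b hab
    rcases trichotomous_of s a b with h | h | h
    · exact Or.inl h
    · exact absurd h hab
    · exact Or.inr h
  have irr : ∀ i, ¬ r i i := fun i => irrefl_of r i
  have asy : ∀ i j, r i j → ¬ r j i := fun i j => asymm_of r
  -- `x i` last among its pair and after the `j` pair is impossible
  have hx : ∀ i j, r i j → s (z i) (x i) → s (x j) (x i) → False := by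
    intro i j hij h1 h2
    obtain ⟨v, hv, hne, hd⟩ := hs (x i) ⟨_, h1⟩
    have d1 := hd (x i) (Or.inr rfl) (Or.inl rfl)
    have d2 := hd (z i) (Or.inl h1) (Or.inr (by simp [gr, rel]))
    have hne' : i ≠ j := fun h => irr i (by rw [← h] at hij; exact hij)
    have d3 := hd (x j) (Or.inl h2) (Or.inr (by simp [gr, rel, hne']))
    have := irr i
    have := asy i j hij
    cases v <;> simp_all [gr, rel]
  have hz : ∀ i j, r i j → s (x i) (z i) → s (z j) (z i) → False := by
    intro i j hij h1 h2
    obtain ⟨v, hv, hne, hd⟩ := hs (z i) ⟨_, h1⟩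
    have d1 := hd (z i) (Or.inr rfl) (Or.inl rfl)
    have d2 := hd (x i) (Or.inl h1) (Or.inr (by simp [gr, rel]))
    have hne' : i ≠ j := fun h => irr i (by rw [← h] at hij; exact hij)
    have d3 := hd (z j) (Or.inl h2) (Or.inr (by simp [gr, rel, hne']))
    have := irr i
    have := asy i j hij
    cases v <;> simp_all [gr, rel]
  refine (RelEmbedding.ofMonotone (fun i => if s (x i) (z i) then z i else x i) ?_).ordinal_type_le
  intro i j hij
  have hne' : i ≠ j := fun h => irr i (by rw [← h] at hij; exact hij)
  have tr : ∀ a b c, s a b → s b c → s a c := fun a b c => trans_of s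
  split_ifs with h1 h2 h2
  · rcases tri (z i) (z j) (by simp [hne']) with h | h
    · exact h
    · exact (hz i j hij h1 h).elim
  · have h2' : s (z j) (x j) := (tri (x j) (z j) (by simp)).resolve_left h2
    rcases tri (z i) (x j) (by simp) with h | h
    · exact h
    · exact (hz i j hij h1 (tr _ _ _ h2' h)).elim
  · have h1' : s (z i) (x i) := (tri (x i) (z i) (by simp)).resolve_left h1
    rcases tri (x i) (z j) (by simp) with h | h
    · exact h
    · exact (hx i j hij h1' (tr _ _ _ h2 h)).elim
  · have h1' : s (z i) (x i) := (tri (x i) (z i) (by simp)).resolve_left h1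
    rcases tri (x i) (x j) (by simp [hne']) with h | h
    · exact h
    · exact (hx i j hij h1' h).elim

lemma spec {α : Type} (r : α → α → Prop) [IsWellOrder α r] (f : Vx α → Ordinal.{0})
    (hf : Function.Injective f)
    (hw : f w = 0) (hw' : f w' = 1) (hyx : ∀ i, f (y i) < f (x i)) (hxz : ∀ i, f (x i) < f (z i))
    (hy : ∀ i, 1 < f (y i)) (hz : ∀ i j, r i j → f (z i) < f (z j)) :
    ConstructionOrderSpec (gr r) (fun a b => f a < f b) := by
  have hx : ∀ i, 1 < f (x i) := fun i => (hy i).trans (hyx i)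
  have hz1 : ∀ i, 1 < f (z i) := fun i => (hx i).trans (hxz i)
  have h01 : (0 : Ordinal.{0}) < 1 := zero_lt_one
  intro v hv
  cases v with
  | w => obtain ⟨u, hu⟩ := hv; change f u < f w at hu; rw [hw] at hu; exact absurd hu not_lt_zero
  | w' =>
    refine ⟨w, by change f w < f w'; rw [hw, hw']; exact h01, by simp, ?_⟩
    rintro u (hu | hu) hadj
    · have : u = w := by
        apply hf; rw [hw]; change f u < f w' at hu; rw [hw'] at hu; simpa using hu
      exact Or.inl this
    · subst hu; right; simp [gr, rel]
  | x i =>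
    refine ⟨w, by change f w < f (x i); rw [hw]; exact h01.trans (hx i), by simp, ?_⟩
    rintro u hu hadj
    have hzi : u ≠ z i := by
      rintro rfl
      rcases hu with hu | hu
      · exact absurd hu (not_lt.2 (hxz i).le)
      · cases hu
    cases u <;> simp_all [gr, rel]
  | y i =>
    refine ⟨w', by change f w' < f (y i); rw [hw']; exact hy i, by simp, ?_⟩
    rintro u hu hadj
    have hxi : u ≠ x i := by
      rintro rfl
      rcases hu with hu | hu
      · exact absurd hu (not_lt.2 (hyx i).le)
      · cases hu
    cases u <;> simp_all [gr, rel]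
  | z i =>
    refine ⟨y i, (hyx i).trans (hxz i), by simp, ?_⟩
    rintro u hu hadj
    have hzk : ∀ k, u = z k → k = i ∨ r k i := by
      rintro k rfl
      rcases trichotomous_of r k i with h | h | h
      · exact Or.inr h
      · exact Or.inl h
      · rcases hu with hu | hu
        · exact absurd hu (not_lt.2 (hz _ _ h).le)
        · left; injection hu
    cases u with
    | y k => by_cases h : k = i <;> simp_all [gr, rel] <;> grind
    | _ => simp_all [gr, rel]

lemma countable_Vx (α : Type) [Countable α] : Countable (Vx α) := by
  let g : Vx α → ℕ × Option α := fun v => match v with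
    | w => (0, none)
    | w' => (1, none)
    | x a => (2, some a)
    | z a => (3, some a)
    | y a => (4, some a)
  apply Function.Injective.countable (f := g)
  intro a b h
  cases a <;> cases b <;> simp_all [g]

def code {α : Type} (k : α → Ordinal.{0}) : Vx α → Ordinal.{0} × ℕ
  | w => (0, 0)
  | w' => (0, 1)
  | y a => (k a, 0)
  | x a => (k a, 1)
  | z a => (k a, 2)

lemma code_inj {α : Type} (k : α → Ordinal.{0}) (hk : ∀ a, 0 < k a)
    (hkinj : ∀ a b, k a = k b → a = b) : Function.Injective (code k) := by
  intro u v e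
  have e1 := congrArg Prod.fst e
  have e2 := congrArg Prod.snd e
  cases u <;> cases v <;> simp only [code] at e1 e2 <;>
    first
    | rfl
    | exact absurd e1 (hk _).ne
    | exact absurd e1 (hk _).ne'
    | (rw [hkinj _ _ e1]; done)
    | (exfalso; omega)

lemma infinite_case {α : Type} (r : α → α → Prop) [IsWellOrder α r] (hl : ω ≤ type r) :
    ∃ (s : Vx α → Vx α → Prop) (_ : IsWellOrder (Vx α) s),
      ConstructionOrderSpec (gr r) s ∧ type s = type r := by
  classical
  obtain ⟨mu, h, hmu, hpos, hlt, hinj, hmono⟩ := exists_h (type r) hl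
  let p : α → Ordinal.{0} := fun a => typein r a
  have hp : ∀ a, p a < type r := fun a => typein_lt_type r a
  have hpinj : ∀ a b, p a = p b → a = b := fun a b => (typein_inj r).1
  let k : α → Ordinal.{0} := fun a => h (p a)
  have hk : ∀ a, 0 < k a := fun a => hpos _ (hp a)
  have hkinj : ∀ a b, k a = k b → a = b := fun a b e => hpinj a b (hinj _ (hp a) _ (hp b) e)
  have hkmu : ∀ a, ∀ c < 3, 3 * k a + (c : ℕ) < mu := fun a => hlt _ (hp a)
  let f : Vx α → Ordinal.{0} := fun v => match v with
    | w => 3 * 0 + (0 : ℕ)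
    | w' => 3 * 0 + (1 : ℕ)
    | y a => 3 * k a + (0 : ℕ)
    | x a => 3 * k a + (1 : ℕ)
    | z a => if p a < mu then 3 * k a + (2 : ℕ) else p a
  have h0mu : ∀ a : α, ∀ c < 3, 3 * 0 + ((c : ℕ) : Ordinal) < mu :=
    fun a c hc => (mul3_lt (hk a) c 0 hc).trans (hkmu a 0 (by norm_num))
  -- a coding of each vertex
  have hz1 : ∀ a, p a < mu → f (z a) = 3 * k a + (2 : ℕ) := fun a ha => if_pos ha
  have hz2 : ∀ a, ¬ p a < mu → f (z a) = p a := fun a ha => if_neg ha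
  have hinjf : Function.Injective f := by
    have lo : ∀ a v, ¬ p a < mu → f v = f (z a) → v = z a := by
      intro a v ha e
      rw [hz2 a ha] at e
      have : ¬ f v < mu := by rw [e]; exact ha
      cases v with
      | w => exact absurd (h0mu a 0 (by norm_num)) this
      | w' => exact absurd (h0mu a 1 (by norm_num)) this
      | y b => exact absurd (hkmu b 0 (by norm_num)) this
      | x b => exact absurd (hkmu b 1 (by norm_num)) this
      | z b =>
        by_cases hb : p b < mu
        · rw [hz1 b hb] at this; exact absurd (hkmu b 2 (by norm_num)) this
        · rw [hz2 b hb] at e; rw [hpinj _ _ e]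
    let O : Vx α → Ordinal.{0} × ℕ := code k
    have hO : Function.Injective O := code_inj k hk hkinj
    have hO3 : ∀ v, (O v).2 < 3 := by intro v; cases v <;> simp [O, code]
    have hfO : ∀ v, (∀ a, v = z a → p a < mu) → f v = 3 * (O v).1 + ((O v).2 : ℕ) := by
      intro v hv
      cases v with
      | z a => exact hz1 a (hv a rfl)
      | _ => rfl
    intro u v e
    by_cases hu : ∀ a, u = z a → p a < mu
    · by_cases hv : ∀ a, v = z a → p a < mu
      · rw [hfO u hu, hfO v hv] at e
        have := mul3_inj (hO3 u) (hO3 v) e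
        exact hO (Prod.ext this.1 this.2)
      · push Not at hv
        obtain ⟨a, rfl, ha⟩ := hv
        exact lo a u (not_lt.2 ha) e
    · push Not at hu
      obtain ⟨a, rfl, ha⟩ := hu
      exact (lo a v (not_lt.2 ha) e.symm).symm
  have hxz : ∀ i, f (x i) < f (z i) := by
    intro i
    by_cases hi : p i < mu
    · rw [hz1 i hi]
      change 3 * k i + ((1 : ℕ) : Ordinal) < _
      gcongr
      norm_num
    · rw [hz2 i hi]
      exact lt_of_lt_of_le (hkmu i 1 (by norm_num)) (not_lt.1 hi)
  have hsp : ConstructionOrderSpec (gr r) (fun a b => f a < f b) := by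
    apply spec r f hinjf
    · simp [f]
    · simp [f]
    · intro i
      change 3 * k i + ((0 : ℕ) : Ordinal) < 3 * k i + ((1 : ℕ) : Ordinal)
      gcongr
      norm_num
    · exact hxz
    · intro i
      have := mul3_lt (hk i) 1 0 (by norm_num)
      change 1 < 3 * k i + ((0 : ℕ) : Ordinal)
      simpa using this
    · intro i j hij
      have hpij : p i < p j := (typein_lt_typein r).2 hij
      by_cases hj : p j < mu
      · rw [hz1 j hj, hz1 i (hpij.trans hj)]
        exact mul3_lt (hmono _ _ hpij hj) 2 2 (by norm_num)
      · rw [hz2 j hj]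
        by_cases hi : p i < mu
        · rw [hz1 i hi]
          exact lt_of_lt_of_le (hkmu i 2 (by norm_num)) (not_lt.1 hj)
        · rw [hz2 i hi]; exact hpij
  have hwo : IsWellOrder (Vx α) (fun a b => f a < f b) :=
    (RelEmbedding.preimage ⟨f, hinjf⟩ ((· < ·) : Ordinal → Ordinal → Prop)).isWellOrder
  have hflt : ∀ v, f v < type r := by
    have hne : Nonempty α := by
      by_contra hc
      rw [not_nonempty_iff] at hc
      have : type r = 0 := type_eq_zero_of_empty r
      rw [this] at hl
      exact absurd hl (not_le.2 omega0_pos)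
    obtain ⟨a0⟩ := hne
    intro v
    cases v with
    | w => exact (h0mu a0 0 (by norm_num)).trans_le hmu
    | w' => exact (h0mu a0 1 (by norm_num)).trans_le hmu
    | y b => exact (hkmu b 0 (by norm_num)).trans_le hmu
    | x b => exact (hkmu b 1 (by norm_num)).trans_le hmu
    | z b =>
      by_cases hb : p b < mu
      · rw [hz1 b hb]; exact (hkmu b 2 (by norm_num)).trans_le hmu
      · rw [hz2 b hb]; exact hp b
  refine ⟨_, hwo, hsp, le_antisymm ?_ (forced r _ hsp)⟩
  refine (RelEmbedding.ofMonotone (fun v => enum r ⟨f v, hflt v⟩) ?_).ordinal_type_le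
  intro a b hab
  exact enum_lt_enum.2 hab

lemma finite_case {α : Type} (r : α → α → Prop) [IsWellOrder α r] (hl : type r < ω) :
    Constructible (⊤ : SimpleGraph α) ∧ IsLeast (constructionTimes (⊤ : SimpleGraph α)) (type r) := by
  have hsp : ConstructionOrderSpec (⊤ : SimpleGraph α) r := by
    rintro v ⟨u, hu⟩
    refine ⟨u, hu, ?_, ?_⟩
    · rintro rfl; exact irrefl_of r _ hu
    · intro t _ _
      by_cases h : t = u
      · exact Or.inl h
      · right; rw [SimpleGraph.top_adj]; exact fun e => h e.symm
  refine ⟨⟨r, inferInstance, hsp⟩, ⟨r, inferInstance, hsp, rfl⟩, ?_⟩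
  rintro o ⟨s, hs, -, rfl⟩
  obtain ⟨n, hn⟩ := lt_omega0.1 hl
  have h1 : (type s).card = n := by
    rw [card_type, ← card_type r, hn, card_nat]
  rw [card_eq_nat.1 h1, hn]

end CT

theorem exists_graph_with_construction_time (lam : Ordinal.{0}) (h1 : 1 ≤ lam)
    (hcount : lam.card ≤ Cardinal.aleph0) :
    ∃ (V : Type) (G : SimpleGraph V), Countable V ∧ Constructible G ∧
      IsLeast (constructionTimes G) lam := by
  induction lam using Ordinal.inductionOn with
  | type α r =>
    have hc : Countable α := by
      rw [← Cardinal.mk_le_aleph0_iff, ← Ordinal.card_type r]; exact hcount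
    by_cases hl : Ordinal.type r < Ordinal.omega0
    · exact ⟨α, ⊤, hc, CT.finite_case r hl⟩
    · obtain ⟨s, hs, hsp, ht⟩ := CT.infinite_case r (not_lt.1 hl)
      refine ⟨CT.Vx α, CT.gr r, CT.countable_Vx α, ⟨s, hs, hsp⟩, ⟨s, hs, hsp, ht⟩, ?_⟩
      rintro o ⟨s', hs', hsp', rfl⟩
      exact CT.forced r s' hsp'
end

section
/- Let G be the graph obtained from countably infinitely many pairwise disjoint copies K_1, K_2, ... of the graph K (with the vertices of K_i written x_i, y_i, z_i, z'_i, t_i, t'_i, w_i) together with two further vertices A and B, where A is joined to x_i and y_i for every i, B is joined to x_i for every i, and A is joined to B. Then G is constructible and its construction time is exactly ω + 1. -/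
universe u

/-- Vertices: two special vertices `A` and `B`, and for each `i : ℕ` a disjoint copy `K_{i+1}`
of `K` with vertices `X i, Y i, Z i, Z' i, T i, T' i, W i`. -/
inductive OmegaVert : Type
  | A | B | X (i : ℕ) | Y (i : ℕ) | Z (i : ℕ) | Z' (i : ℕ) | T (i : ℕ) | T' (i : ℕ) | W (i : ℕ)

open OmegaVert in
/-- The edges: the `K`-edges within each copy, `A` joined to every `x_i` and `y_i`, `B` joined
to every `x_i`, and `A` joined to `B`. -/
def OmegaRel : OmegaVert → OmegaVert → Prop := fun a b =>
  (∃ i : ℕ,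
    (a = X i ∧ b = Y i) ∨ (a = X i ∧ b = T i) ∨ (a = X i ∧ b = T' i) ∨
    (a = Y i ∧ b = Z i) ∨ (a = Y i ∧ b = Z' i) ∨ (a = Y i ∧ b = T i) ∨ (a = Y i ∧ b = T' i) ∨
    (a = Z i ∧ b = Z' i) ∨ (a = Z i ∧ b = T i) ∨ (a = Z i ∧ b = W i) ∨
    (a = Z' i ∧ b = T' i) ∨ (a = Z' i ∧ b = W i) ∨
    (a = T i ∧ b = W i) ∨ (a = T' i ∧ b = W i) ∨
    (a = A ∧ b = X i) ∨ (a = A ∧ b = Y i) ∨ (a = B ∧ b = X i)) ∨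
  (a = A ∧ b = B)

/-- The graph of Theorem 10. -/
def OmegaGraph : SimpleGraph OmegaVert := SimpleGraph.fromRel OmegaRel

open OmegaVert in
def omPos : OmegaVert → ℕ ⊕ Unit
  | A => Sum.inl 0
  | B => Sum.inr ()
  | Y i => Sum.inl (7 * i + 1)
  | Z i => Sum.inl (7 * i + 2)
  | Z' i => Sum.inl (7 * i + 3)
  | T i => Sum.inl (7 * i + 4)
  | W i => Sum.inl (7 * i + 5)
  | T' i => Sum.inl (7 * i + 6)
  | X i => Sum.inl (7 * i + 7)

theorem omPos_inj : Function.Injective omPos := by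
  intro a b h
  cases a <;> cases b <;> simp [omPos] at h ⊢ <;> omega

def omR : OmegaVert → OmegaVert → Prop :=
  fun a b => Sum.Lex (· < ·) (emptyRelation) (omPos a) (omPos b)

def omEmb : omR ↪r (Sum.Lex ((· < ·) : ℕ → ℕ → Prop) (emptyRelation : Unit → Unit → Prop)) :=
  ⟨⟨omPos, omPos_inj⟩, Iff.rfl⟩

theorem omR_wo : IsWellOrder OmegaVert omR := omEmb.isWellOrder

theorem omR_le : @Ordinal.type _ omR omR_wo ≤ Ordinal.omega0 + 1 := by
  haveI := omR_wo
  have h := Ordinal.type_le_iff'.2 ⟨omEmb⟩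
  rw [Ordinal.type_sum_lex] at h
  simpa using h

open OmegaVert in
def omDom : OmegaVert → OmegaVert
  | A => A
  | B => A
  | Y _ => A
  | Z i => Y i
  | Z' i => Y i
  | T i => Y i
  | W i => Z i
  | T' i => Z' i
  | X i => Y i

theorem omR_spec : ConstructionOrderSpec OmegaGraph omR := by
  intro x hx
  refine ⟨omDom x, ?_, ?_, ?_⟩
  · obtain ⟨y, hy⟩ := hx
    cases x <;> simp [omDom, omR, omPos] at hy ⊢
    cases y <;> simp [omPos] at hy
  · obtain ⟨y, hy⟩ := hx
    cases x <;> simp [omDom, omR, omPos] at hy ⊢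
    cases y <;> simp [omPos] at hy
  · intro z hz
    simp only [Set.mem_setOf_eq] at hz
    cases x <;> cases z <;> simp [omDom, omR, omPos, OmegaGraph, OmegaRel] at hz ⊢ <;> grind

open OmegaVert in
def omCopy (i : ℕ) : Set OmegaVert := {X i, Y i, Z i, Z' i, T i, T' i, W i}

open OmegaVert in
theorem omStiff (i : ℕ) (S : Set OmegaVert) (hS : omCopy i ⊆ S) (hA : A ∈ S) (hB : B ∈ S)
    (v u : OmegaVert) (hv : v ∈ omCopy i) : ¬ DominatesOn OmegaGraph S u v := by
  rintro ⟨hne, h⟩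
  have hX := h (X i) (hS (by simp [omCopy]))
  have hY := h (Y i) (hS (by simp [omCopy]))
  have hZ := h (Z i) (hS (by simp [omCopy]))
  have hZ' := h (Z' i) (hS (by simp [omCopy]))
  have hT := h (T i) (hS (by simp [omCopy]))
  have hT' := h (T' i) (hS (by simp [omCopy]))
  have hW := h (W i) (hS (by simp [omCopy]))
  have hA := h A hA
  have hB := h B hB
  clear h hS
  simp only [omCopy, Set.mem_insert_iff, Set.mem_singleton_iff] at hv
  rcases hv with rfl | rfl | rfl | rfl | rfl | rfl | rfl <;> cases u <;>
    simp [OmegaGraph, OmegaRel] at * <;> grind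

open OmegaVert in
theorem om_lower (r : OmegaVert → OmegaVert → Prop) [hr : IsWellOrder OmegaVert r]
    (hs : ConstructionOrderSpec OmegaGraph r) : Ordinal.omega0 + 1 ≤ Ordinal.type r := by
  classical
  by_contra hlt
  have hle : Ordinal.type r ≤ Ordinal.omega0 := by
    rw [not_le, ← Order.succ_eq_add_one, Order.lt_succ_iff] at hlt
    exact hlt
  have hfin : ∀ b, {a | r a b}.Finite := by
    intro b
    have h1 : Ordinal.typein r b < Ordinal.omega0 := (Ordinal.typein_lt_type r b).trans_le hle
    have h2 := Ordinal.card_typein (r := r) b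
    rw [Ordinal.lt_omega0] at h1
    obtain ⟨n, hn⟩ := h1
    rw [hn, Ordinal.card_nat] at h2
    have : Cardinal.mk {a // r a b} < Cardinal.aleph0 := by
      first
      | (rw [h2]; exact Cardinal.natCast_lt_aleph0)
      | (rw [← h2]; exact Cardinal.natCast_lt_aleph0)
    exact Cardinal.lt_aleph0_iff_set_finite.1 this
  have hXinj : Function.Injective X := fun a b h => by simpa using h
  have hf : (X ⁻¹' ({a | r a A} ∪ {a | r a B})).Finite :=
    ((hfin A).union (hfin B)).preimage hXinj.injOn
  obtain ⟨i, hi⟩ := hf.exists_notMem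
  simp only [Set.mem_preimage, Set.mem_union, Set.mem_setOf_eq, not_or] at hi
  letI := linearOrderOfSTO r
  have hcf : (omCopy i).Finite := by unfold omCopy; exact Set.toFinite _
  obtain ⟨v, hv, hmax⟩ := Set.exists_max_image (omCopy i) id hcf ⟨X i, by simp [omCopy]⟩
  have hXv : X i ≤ v := hmax (X i) (by simp [omCopy])
  have hAv : A < v := by
    refine lt_of_lt_of_le (lt_of_le_of_ne (not_lt.1 hi.1) (by simp)) hXv
  have hBv : B < v := by
    refine lt_of_lt_of_le (lt_of_le_of_ne (not_lt.1 hi.2) (by simp)) hXv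
  obtain ⟨u, -, hu⟩ := hs v ⟨A, hAv⟩
  refine omStiff i _ ?_ ?_ ?_ v u hv hu
  · intro z hz
    exact (lt_or_eq_of_le (hmax z hz))
  · exact Or.inl hAv
  · exact Or.inl hBv

theorem omegaGraph_construction_time :
    Constructible OmegaGraph ∧
    IsLeast (constructionTimes OmegaGraph) (Ordinal.omega0 + 1) := by
  refine ⟨⟨omR, omR_wo, omR_spec⟩, ⟨omR, omR_wo, omR_spec, ?_⟩, ?_⟩
  · haveI := omR_wo
    exact le_antisymm omR_le (om_lower omR omR_spec)
  · rintro o ⟨r, hr, hs, rfl⟩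
    exact om_lower r hs
end

section
/- Let G be a finite constructible graph with a fixed construction order (a linear order on its vertices as in the definition of constructibility) and a fixed domination map δ. For a vertex u, the trail of u is the finite sequence u, δ(u), δ(δ(u)), ..., ending at the root. Then for any two adjacent vertices u and v of G and any vertex u' on the trail of u, the maximal (with respect to the construction order) vertex v' on the trail of v satisfying v' ≤ u' is adjacent or equal to u'. -/
universe u

theorem trail_aux {V : Type u} [Fintype V] [LinearOrder V]
    (G : SimpleGraph V) (δ : V → V)
    (hroot : ∀ v : V, ¬ (∃ u, u < v) → δ v = v)
    (hcons : ∀ v : V, (∃ u, u < v) → δ v < v ∧ DominatesOn G {z | z ≤ v} (δ v) v) :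
    ∀ u v : V, (u = v ∨ G.Adj u v) → ∀ u' : V, (∃ k : ℕ, δ^[k] u = u') →
      ∀ v' : V, IsGreatest {w : V | (∃ k : ℕ, δ^[k] v = w) ∧ w ≤ u'} v' →
        v' = u' ∨ G.Adj v' u' := by
  have hle : ∀ x, δ x ≤ x := by
    intro x
    by_cases h : ∃ u, u < x
    · exact (hcons x h).1.le
    · exact (hroot x h).le
  have hit : ∀ (k : ℕ) x, δ^[k] x ≤ x := by
    intro k
    induction k with
    | zero => intro x; simp
    | succ k ih => intro x; rw [Function.iterate_succ_apply]; exact (ih _).trans (hle x)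
  intro u
  induction u using WellFoundedLT.induction with
  | ind u ihu =>
  intro v
  induction v using WellFoundedLT.induction with
  | ind v ihv =>
  rintro huv u' ⟨k, hk⟩ v' ⟨⟨⟨m, hm⟩, hvu⟩, hmax⟩
  have hu'u : u' ≤ u := hk ▸ hit k u
  rcases lt_or_ge u v with hlt | hge
  · obtain ⟨h1, -, h2⟩ := hcons v ⟨u, hlt⟩
    have h3 := h2 u hlt.le (huv.imp id SimpleGraph.Adj.symm)
    refine ihv (δ v) h1 (h3.imp id SimpleGraph.Adj.symm) u' ⟨k, hk⟩ v' ⟨⟨?_, hvu⟩, ?_⟩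
    · cases m with
      | zero => exact absurd ((show v = v' from hm).le.trans (hvu.trans hu'u)) (not_le.2 hlt)
      | succ m => exact ⟨m, by rw [← hm, Function.iterate_succ_apply]⟩
    · rintro w ⟨⟨j, hj⟩, hw⟩
      exact hmax ⟨⟨j + 1, by rw [← hj, Function.iterate_succ_apply]⟩, hw⟩
  · by_cases he : u' = u
    · have hv1 : v ≤ v' := hmax ⟨⟨0, rfl⟩, he ▸ hge⟩
      have hv2 : v' = v := le_antisymm (hm ▸ hit m v) hv1
      rw [he, hv2]
      exact huv.imp Eq.symm SimpleGraph.Adj.symm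
    · obtain ⟨h1, -, h2⟩ := hcons u ⟨u', lt_of_le_of_ne hu'u he⟩
      have h3 := h2 v hge (huv.imp Eq.symm id)
      cases k with
      | zero => exact absurd hk.symm he
      | succ k =>
        exact ihu (δ u) h1 v (h3.imp Eq.symm id) u'
          ⟨k, by rw [← hk, Function.iterate_succ_apply]⟩ v' ⟨⟨⟨m, hm⟩, hvu⟩, hmax⟩

theorem trail_maximal_vertex_adj {V : Type u} [Fintype V] [LinearOrder V]
    (G : SimpleGraph V) (δ : V → V)
    (hroot : ∀ v : V, ¬ (∃ u, u < v) → δ v = v)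
    (hcons : ∀ v : V, (∃ u, u < v) → δ v < v ∧ DominatesOn G {z | z ≤ v} (δ v) v) :
    ∀ u v : V, G.Adj u v → ∀ u' : V, (∃ k : ℕ, δ^[k] u = u') →
      ∀ v' : V, IsGreatest {w : V | (∃ k : ℕ, δ^[k] v = w) ∧ w ≤ u'} v' →
        v' = u' ∨ G.Adj v' u' := by
  intro u v h
  exact trail_aux G δ hroot hcons u v (Or.inr h)
end

section
/- For any finite graph G and any positive integer n, the graph G*P_n is constructible. -/
universe u

/-- The graph `G*P_n`: vertex set `V × {0, 1, ..., n}`, with distinct `(x, j)` and `(x', j')`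
adjacent iff either (`x` and `x'` are adjacent or equal and `|j - j'| ≤ 1`) or `j = j' = n`. -/
def starPath {V : Type u} (G : SimpleGraph V) (n : ℕ) : SimpleGraph (V × Fin (n + 1)) :=
  SimpleGraph.fromRel (fun p q =>
    ((p.1 = q.1 ∨ G.Adj p.1 q.1) ∧ p.2.val ≤ q.2.val + 1 ∧ q.2.val ≤ p.2.val + 1) ∨
    (p.2.val = n ∧ q.2.val = n))

theorem starPath_constructible {V : Type u} [Fintype V] (G : SimpleGraph V) (n : ℕ)
    (hn : 0 < n) : Constructible (starPath G n) := by
  classical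
  let e := Fintype.equivFin V
  let r : V × Fin (n + 1) → V × Fin (n + 1) → Prop := fun p q =>
    q.2.val < p.2.val ∨ (p.2.val = q.2.val ∧ (e p.1).val < (e q.1).val)
  have htri : ∀ p q, ¬ r p q → ¬ r q p → p = q := by
    intro p q h1 h2
    simp only [r] at h1 h2
    have h3 : p.2.val = q.2.val := by omega
    have h4 : (e p.1).val = (e q.1).val := by omega
    exact Prod.ext (e.injective (Fin.ext h4)) (Fin.ext h3)
  have h1 : IsTrans _ r := ⟨fun a b c h1 h2 => by simp only [r] at *; omega⟩
  have h2 : Std.Irrefl r := ⟨fun a h => by simp only [r] at h; omega⟩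
  have h3 : Std.Trichotomous r := ⟨htri⟩
  refine ⟨r, { wf := Finite.wellFounded_of_trans_of_irrefl r }, ?_⟩
  rintro ⟨x, j⟩ ⟨w, hw⟩
  by_cases hj : j.val = n
  · refine ⟨w, hw, ?_, ?_⟩
    · rintro rfl
      exact h2.irrefl _ hw
    · intro z hz _
      by_cases hzw : z = w
      · exact Or.inl hzw
      · refine Or.inr ((SimpleGraph.fromRel_adj _ _ _).2 ⟨Ne.symm hzw, Or.inl (Or.inr ?_)⟩)
        have hwl := w.2.isLt
        have hzl := z.2.isLt
        have hz' : n ≤ z.2.val := by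
          rcases hz with hz | rfl
          · simp only [r] at hz; omega
          · exact hj.ge
        simp only [r] at hw
        omega
  · have hjl := j.isLt
    refine ⟨(x, ⟨j.val + 1, by omega⟩), ?_, ?_, ?_⟩
    · left; simp
    · intro h
      have := congrArg (fun p => p.2.val) h
      simp at this
    · intro z hz hadj
      by_cases hzw : z = (x, ⟨j.val + 1, by omega⟩)
      · exact Or.inl hzw
      · refine Or.inr ((SimpleGraph.fromRel_adj _ _ _).2 ⟨Ne.symm hzw, Or.inl (Or.inl ?_)⟩)
        have hz' : j.val ≤ z.2.val := by
          rcases hz with hz | rfl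
          · simp only [r] at hz; omega
          · exact le_rfl
        rcases hadj with rfl | hadj
        · exact ⟨Or.inl rfl, by simp, by simp; omega⟩
        · obtain ⟨_, hh⟩ := (SimpleGraph.fromRel_adj _ _ _).1 hadj
          have := G.adj_comm x z.1
          simp only at hh ⊢
          rcases hh with (⟨ha, hb, hc⟩ | ⟨ha, hb⟩) | (⟨ha, hb, hc⟩ | ⟨ha, hb⟩)
          · exact ⟨ha, by omega, by omega⟩
          · omega
          · exact ⟨ha.imp Eq.symm (fun h => h.symm), by omega, by omega⟩
          · omega
end

section
/- Let G be a finite graph that is not constructible and let n be a positive integer. Then in the game of cops and robbers on G*P_n, the robber has a strategy guaranteeing that in any play in which the cop never occupies a vertex of the form (x, n), the robber is never caught. In particular, the cop can be forced to visit a vertex of the form (x, n) before catching the robber. -/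
universe u

/-- Given a robber strategy `τ` (a function of the cop's history of positions) and a cop
position sequence `c`, the robber's position at time `m`: the robber has seen the cop's
first `m + 1` positions when making his `m`-th move. -/
def robPos {W : Type u} (τ : List W → W) (c : ℕ → W) (m : ℕ) : W :=
  τ (List.ofFn fun i : Fin (m + 1) => c i.val)

theorem aux_dichotomy {V : Type u} [DecidableEq V] (G : SimpleGraph V) (k : ℕ) :
    ∀ S : Finset V, S.card = k →
    (∃ f : V → ℕ, (∀ x ∈ S, ∀ y ∈ S, f x = f y → x = y) ∧
      ∀ x ∈ S, (∃ y ∈ S, f y < f x) → ∃ y ∈ S, f y < f x ∧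
        DominatesOn G {z | z ∈ S ∧ f z ≤ f x} y x) ∨
    (∃ T : Finset V, ∃ ρ : V → V, T ⊆ S ∧ 1 < T.card ∧
      (∀ x ∈ T, ∀ y ∈ T, ¬ DominatesOn G (T : Set V) y x) ∧
      (∀ x ∈ T, ρ x = x) ∧ (∀ x ∈ S, ρ x ∈ T) ∧
      (∀ x ∈ S, ∀ y ∈ S, (x = y ∨ G.Adj x y) → (ρ x = ρ y ∨ G.Adj (ρ x) (ρ y)))) := by
  induction k with
  | zero =>
    intro S hS
    left
    have : S = ∅ := Finset.card_eq_zero.mp hS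
    subst this
    exact ⟨fun _ => 0, by simp, by simp⟩
  | succ k ih =>
    intro S hS
    by_cases hst : ∀ x ∈ S, ∀ y ∈ S, ¬ DominatesOn G (S : Set V) y x
    · by_cases hc : 1 < S.card
      · right
        exact ⟨S, id, subset_rfl, hc, hst, fun _ _ => rfl, fun _ h => h, fun _ _ _ _ h => h⟩
      · left
        have h1 : S.card ≤ 1 := by omega
        rw [Finset.card_le_one] at h1
        exact ⟨fun _ => 0, fun x hx y hy _ => h1 x hx y hy, by simp⟩
    · push Not at hst
      obtain ⟨x, hx, y, hy, hne, hdom⟩ := hst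
      have hyx : y ∈ S.erase x := Finset.mem_erase.mpr ⟨hne, hy⟩
      rcases ih (S.erase x) (by rw [Finset.card_erase_of_mem hx]; omega) with
        ⟨f, hinj, hf⟩ | ⟨T, ρ, hTS, hT, hstuck, hid, hmap, hhom⟩
      · left
        have hlt : ∀ z ∈ S, f z < S.sup f + 1 := fun z hz =>
          Nat.lt_succ_of_le (Finset.le_sup (f := f) hz)
        refine ⟨Function.update f x (S.sup f + 1), ?_, ?_⟩
        · intro a ha b hb hab
          by_cases hax : a = x <;> by_cases hbx : b = x
          · rw [hax, hbx]
          · subst hax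
            have := hlt b hb
            simp [Function.update_of_ne hbx] at hab
            omega
          · subst hbx
            have := hlt a ha
            simp [Function.update_of_ne hax] at hab
            omega
          · rw [Function.update_of_ne hax, Function.update_of_ne hbx] at hab
            exact hinj a (by simp [*]) b (by simp [*]) hab
        · intro a ha hex
          by_cases hax : a = x
          · subst hax
            refine ⟨y, hy, ?_, hne, fun z hz => hdom z hz.1⟩
            rw [Function.update_of_ne hne]
            simpa using hlt y hy
          · rw [Function.update_of_ne hax] at hex ⊢
            obtain ⟨b, hb, hba⟩ := hex
            have hla := hlt a ha
            have hbx : b ≠ x := by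
              rintro rfl
              simp at hba
              omega
            rw [Function.update_of_ne hbx] at hba
            obtain ⟨w, hw, hwa, hwne, hwd⟩ :=
              hf a (by simp [*]) ⟨b, by simp [*], hba⟩
            have hwx := (Finset.mem_erase.mp hw).1
            refine ⟨w, (Finset.mem_erase.mp hw).2, ?_, hwne, ?_⟩
            · rwa [Function.update_of_ne hwx]
            · rintro z ⟨hzS, hz⟩
              have hzx : z ≠ x := by
                rintro rfl
                simp at hz
                omega
              rw [Function.update_of_ne hzx] at hz
              exact hwd z ⟨by simp [*], hz⟩
      · right
        have hxT : x ∉ T := fun h => by simpa using hTS h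
        have key : ∀ b ∈ S.erase x, (x = b ∨ G.Adj x b) → (ρ y = ρ b ∨ G.Adj (ρ y) (ρ b)) := by
          intro b hb h
          apply hhom y hyx b hb
          rcases hdom b (Finset.mem_erase.mp hb).2 (h.imp Eq.symm id) with h | h
          · exact Or.inl h.symm
          · exact Or.inr h
        refine ⟨T, Function.update ρ x (ρ y), hTS.trans (Finset.erase_subset _ _), hT, hstuck,
          ?_, ?_, ?_⟩
        · intro a ha
          rw [Function.update_of_ne (by rintro rfl; exact hxT ha)]
          exact hid a ha
        · intro a ha
          by_cases hax : a = x
          · subst hax; simpa using hmap y hyx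
          · rw [Function.update_of_ne hax]
            exact hmap a (by simp [*])
        · intro a ha b hb hab
          by_cases hax : a = x <;> by_cases hbx : b = x
          · left; rw [hax, hbx]
          · subst hax
            simp only [Function.update_self, Function.update_of_ne hbx]
            exact key b (by simp [*]) hab
          · subst hbx
            simp only [Function.update_self, Function.update_of_ne hax]
            exact (key a (by simp [*]) (hab.imp Eq.symm (fun h => h.symm))).imp Eq.symm (fun h => h.symm)
          · rw [Function.update_of_ne hax, Function.update_of_ne hbx]
            exact hhom a (by simp [*]) b (by simp [*]) hab

theorem aux_evade {V : Type u} [Fintype V] (G : SimpleGraph V) (hG : ¬ Constructible G) :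
    ∃ R : V → V → Prop, (∀ c, ∃ r, R c r) ∧
      ∀ c r, R c r → ∀ c', (c = c' ∨ G.Adj c c') →
        c' ≠ r ∧ ∃ r', (r = r' ∨ G.Adj r r') ∧ R c' r' := by
  classical
  rcases aux_dichotomy G _ (Finset.univ : Finset V) rfl with
    ⟨f, hinj, hf⟩ | ⟨T, ρ, -, hT, hstuck, hid, hmap, hhom⟩
  · exfalso
    apply hG
    have hinj' : Function.Injective f := fun x y h => hinj x (by simp) y (by simp) h
    let e : (fun a b : V => f a < f b) ↪r ((· < ·) : ℕ → ℕ → Prop) :=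
      ⟨⟨f, hinj'⟩, Iff.rfl⟩
    refine ⟨fun a b => f a < f b, e.isWellOrder, ?_⟩
    rintro x ⟨y, hy⟩
    obtain ⟨w, -, hw, hne, hd⟩ := hf x (by simp) ⟨y, by simp, hy⟩
    refine ⟨w, hw, hne, fun z hz => hd z ⟨by simp, ?_⟩⟩
    rcases hz with hz | hz
    · exact le_of_lt hz
    · rw [hz]
  · have esc : ∀ q ∈ T, ∀ r ∈ T, q ≠ r →
        ∃ z ∈ T, (r = z ∨ G.Adj r z) ∧ ¬ (q = z ∨ G.Adj q z) := by
      intro q hq r hr hne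
      by_contra hcon
      push Not at hcon
      apply hstuck r hr q hq
      refine ⟨hne, fun z hz h => ?_⟩
      by_contra h2
      have := hcon z hz (h.imp Eq.symm id)
      tauto
    refine ⟨fun c r => r ∈ T ∧ ¬ (ρ c = r ∨ G.Adj (ρ c) r), ?_, ?_⟩
    · intro c
      obtain ⟨r, hr, hne⟩ := Finset.exists_mem_ne hT (ρ c)
      obtain ⟨z, hz, -, h⟩ := esc (ρ c) (hmap c (by simp)) r hr hne.symm
      exact ⟨z, hz, h⟩
    · rintro c r ⟨hr, hn⟩ c' hcc
      have h1 := hhom c (by simp) c' (by simp) hcc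
      have h2 : ρ c' ≠ r := by
        intro h; rw [h] at h1; exact hn h1
      refine ⟨?_, ?_⟩
      · rintro rfl
        exact h2 (hid _ hr)
      · obtain ⟨z, hz, ha, hb⟩ := esc (ρ c') (hmap c' (by simp)) r hr h2
        exact ⟨z, ha, hz, hb⟩

theorem robber_forces_cop_to_top {V : Type u} [Fintype V] (G : SimpleGraph V) (n : ℕ)
    (hn : 0 < n) (hG : ¬ Constructible G) :
    ∃ τ : List (V × Fin (n + 1)) → V × Fin (n + 1),
      ∀ c : ℕ → V × Fin (n + 1),
        (∀ m : ℕ, c (m + 1) = c m ∨ (starPath G n).Adj (c m) (c (m + 1))) →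
        -- the robber's moves are legal
        (∀ m : ℕ, robPos τ c (m + 1) = robPos τ c m ∨
          (starPath G n).Adj (robPos τ c m) (robPos τ c (m + 1))) ∧
        -- if the cop never occupies a vertex of the form (x, n), the robber is never caught
        ((∀ m : ℕ, (c m).2.val ≠ n) →
          ∀ m : ℕ, c m ≠ robPos τ c m ∧ c (m + 1) ≠ robPos τ c m) ∧
        -- in particular, the cop must visit a vertex of the form (x, n) before catching the robber
        (∀ m : ℕ, (c m = robPos τ c m ∨ c (m + 1) = robPos τ c m) →
          ∃ k ≤ m + 1, (c k).2.val = n) := by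
  classical
  obtain ⟨R, hstart, hstep⟩ := aux_evade G hG
  have hne : Nonempty V := by
    by_contra h
    rw [not_nonempty_iff] at h
    exact hG ⟨fun _ _ => False,
      { trichotomous := fun a => (h.false a).elim
        wf := ⟨fun a => (h.false a).elim⟩ }, fun x => (h.false x).elim⟩
  obtain ⟨d⟩ := hne
  choose s hs using hstart
  have hnext : ∀ r c' : V, ∃ r', (r = r' ∨ G.Adj r r') ∧
      ((∃ r'', (r = r'' ∨ G.Adj r r'') ∧ R c' r'') → R c' r') := by
    intro r c'
    by_cases h : ∃ r'', (r = r'' ∨ G.Adj r r'') ∧ R c' r''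
    · obtain ⟨r'', h1, h2⟩ := h
      exact ⟨r'', h1, fun _ => h2⟩
    · exact ⟨r, Or.inl rfl, fun h' => absurd h' h⟩
  choose nx hnx1 hnx2 using hnext
  let τ : List (V × Fin (n + 1)) → V × Fin (n + 1) := fun l =>
    (l.tail.foldl (fun r p => nx r p.1) (s (l.headD (d, 0)).1), 0)
  refine ⟨τ, fun c hc => ?_⟩
  have h0 : robPos τ c 0 = (s (c 0).1, 0) := by
    simp [robPos, τ]
  have hS : ∀ m, robPos τ c (m + 1) = (nx (robPos τ c m).1 (c (m + 1)).1, 0) := by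
    intro m
    simp only [robPos, τ]
    have e1 : (List.ofFn fun i : Fin (m + 1 + 1) => c i.val) =
        (c 0 :: List.ofFn fun i : Fin m => c (i.val + 1)) ++ [c (m + 1)] := by
      rw [List.ofFn_succ_last]
      simp [List.ofFn_succ]
    have e2 : (List.ofFn fun i : Fin (m + 1) => c i.val) =
        c 0 :: List.ofFn fun i : Fin m => c (i.val + 1) := by
      simp [List.ofFn_succ]
    rw [e1, e2]
    simp
  have hz : ∀ m, (robPos τ c m).2 = 0 := fun m => rfl
  have hproj : ∀ m, (c m).2.val ≠ n →
      ((c m).1 = (c (m + 1)).1 ∨ G.Adj (c m).1 (c (m + 1)).1) := by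
    intro m hm
    rcases hc m with h | h
    · left; rw [h]
    · rw [starPath, SimpleGraph.fromRel_adj] at h
      rcases h.2 with (h | h) | (h | h)
      · exact h.1
      · exact absurd h.1 hm
      · exact h.1.imp Eq.symm (fun h => h.symm)
      · exact absurd h.2 hm
  have inv : ∀ m, (∀ k ≤ m, (c k).2.val ≠ n) → R (c m).1 (robPos τ c m).1 := by
    intro m
    induction m with
    | zero => intro _; rw [h0]; exact hs _
    | succ m ih =>
      intro hk
      have h := hstep _ _ (ih fun k hkm => hk k (by omega)) _ (hproj m (hk m (by omega)))
      rw [hS]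
      exact hnx2 _ _ h.2
  have third : ∀ m : ℕ, (c m = robPos τ c m ∨ c (m + 1) = robPos τ c m) →
      ∃ k ≤ m + 1, (c k).2.val = n := by
    intro m hm
    by_contra hcon
    push Not at hcon
    have hR := inv m fun k hk => hcon k (by omega)
    rcases hm with hm | hm
    · exact (hstep _ _ hR _ (Or.inl rfl)).1 (by rw [← hm])
    · exact (hstep _ _ hR _ (hproj m (hcon m (by omega)))).1 (by rw [← hm])
  refine ⟨?_, ?_, third⟩
  · intro m
    by_cases heq : robPos τ c (m + 1) = robPos τ c m
    · exact Or.inl heq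
    · right
      rw [starPath, SimpleGraph.fromRel_adj]
      refine ⟨fun h => heq h.symm, Or.inl (Or.inl ⟨?_, ?_, ?_⟩)⟩
      · rw [hS]; exact hnx1 _ _
      · rw [hz m]; simp
      · rw [hz (m + 1)]; simp
  · intro hk m
    constructor
    · intro h
      obtain ⟨k, -, h⟩ := third m (Or.inl h)
      exact hk k h
    · intro h
      obtain ⟨k, -, h⟩ := third m (Or.inr h)
      exact hk k h
end

section
/- Let α be a countable non-zero limit ordinal. Then there exists a family (S_β)_{β<α} of pairwise disjoint subsets of the set of ordinals less than α such that for every β < α, the order type of S_β (with the ordinal ordering) is exactly β. -/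
/-- The set `S` of ordinals has order type `β` (with its inherited ordering): `S` is
order-isomorphic to the set of ordinals less than `β`. -/
def HasOrderType (S : Set Ordinal) (β : Ordinal) : Prop :=
  Nonempty (S ≃o Set.Iio β)

theorem exists_disjoint_subsets_of_all_smaller_orderTypes (α : Ordinal)
    (hlim : Order.IsSuccLimit α) (hcount : α.card ≤ Cardinal.aleph0) :
    ∃ S : Ordinal → Set Ordinal,
      (∀ β < α, S β ⊆ Set.Iio α) ∧
      (∀ β γ, β < α → γ < α → β ≠ γ → Disjoint (S β) (S γ)) ∧
      (∀ β < α, HasOrderType (S β) β) := by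
  have hc : Countable (Set.Iio α) := by
    rw [← Cardinal.mk_le_aleph0_iff, Cardinal.mk_Iio_ordinal]
    exact Cardinal.lift_le_aleph0.2 hcount
  obtain ⟨g, hg⟩ := hc.exists_injective_nat
  have hk : ∀ x : Ordinal, ∃ k : ℕ, x % Ordinal.omega0 = k := fun x =>
    Ordinal.lt_omega0.1 (Ordinal.mod_lt x Ordinal.omega0_ne_zero)
  choose k hk using hk
  let f : ℕ → Ordinal → Ordinal := fun n x =>
    Ordinal.omega0 * (x / Ordinal.omega0) + (Nat.pair n (k x) : ℕ)
  have hmod : ∀ n x, f n x % Ordinal.omega0 = (Nat.pair n (k x) : ℕ) := by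
    intro n x
    simp only [f]
    rw [Ordinal.mul_add_mod_self, Ordinal.mod_eq_of_lt (Ordinal.natCast_lt_omega0 _)]
  have hmono : ∀ n, StrictMono (f n) := by
    intro n x y hxy
    have hle : x / Ordinal.omega0 ≤ y / Ordinal.omega0 := Ordinal.div_le_left hxy.le _
    rcases hle.lt_or_eq with h | h
    · calc f n x < Ordinal.omega0 * (x / Ordinal.omega0) + Ordinal.omega0 := by
            simp only [f]
            gcongr
            exact Ordinal.natCast_lt_omega0 _
        _ = Ordinal.omega0 * Order.succ (x / Ordinal.omega0) := (Ordinal.mul_succ _ _).symm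
        _ ≤ Ordinal.omega0 * (y / Ordinal.omega0) := by
            gcongr
            exact Order.succ_le_of_lt h
        _ ≤ f n y := le_self_add
    · have hkk : k x < k y := by
        rw [← Ordinal.div_add_mod x Ordinal.omega0, ← Ordinal.div_add_mod y Ordinal.omega0, h,
          hk, hk] at hxy
        simpa using hxy
      simp only [f, h]
      gcongr
      exact Nat.pair_lt_pair_right n hkk
  have hfα : ∀ n x, x < α → f n x < α := by
    intro n x hx
    have h0 : Ordinal.omega0 * (x / Ordinal.omega0) < α := (Ordinal.mul_div_le _ _).trans_lt hx
    simp only [f]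
    generalize Nat.pair n (k x) = m
    induction m with
    | zero => simpa using h0
    | succ m ih =>
      have := hlim.succ_lt ih
      simpa [← add_assoc, Order.succ_eq_add_one] using this
  classical
  refine ⟨fun β => if h : β < α then f (g ⟨β, h⟩) '' Set.Iio β else ∅, ?_, ?_, ?_⟩
  · rintro β hβ y hy
    simp only [hβ, dif_pos] at hy
    obtain ⟨x, hx, rfl⟩ := hy
    exact hfα _ _ (lt_trans hx hβ)
  · intro β γ hβ hγ hne
    simp only [hβ, hγ, dif_pos]
    rw [Set.disjoint_left]
    rintro y ⟨x, hx, rfl⟩ ⟨x', hx', h⟩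
    have h2 := congrArg (· % Ordinal.omega0) h
    simp only [hmod, Nat.cast_inj, Nat.pair_eq_pair] at h2
    exact hne (congrArg Subtype.val (hg h2.1)).symm
  · intro β hβ
    simp only [hβ, dif_pos]
    exact ⟨(((hmono _).strictMonoOn _).orderIso _ _).symm⟩
end

section
/- Let G be a connected locally constructible graph and let V be a finite set of vertices of G. Then the cop has a strategy in the game of cops and robbers on G guaranteeing that, against every robber strategy, either the cop catches the robber or at some time the robber occupies a vertex outside V. -/
universe u

/-- Cop-winning data on a set: a sequence of maps from a constant to the identity. -/
def CWData {W : Type u} (H : SimpleGraph W) (S : Set W) : Prop :=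
  ∃ (N : ℕ) (ρ : ℕ → W → W) (c : W), (∀ p ∈ S, ρ 0 p = c) ∧ (∀ p ∈ S, ρ N p = p) ∧
    ∀ k < N, ∀ p ∈ S, ∀ q ∈ S, (q = p ∨ H.Adj p q) →
      (ρ (k + 1) q = ρ k p ∨ H.Adj (ρ k p) (ρ (k + 1) q))

theorem cwData_step {W : Type u} (H : SimpleGraph W) (S : Set W) (x y : W)
    (hy : y ∈ S) (hd : DominatesOn H S y x) (h : CWData H (S \ {x})) : CWData H S := by
  classical
  obtain ⟨N, ρ, c, h0, hN, hs⟩ := h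
  obtain ⟨hne, hdom⟩ := hd
  let f : W → W := fun p => if p = x then y else p
  have fmem : ∀ p ∈ S, f p ∈ S \ {x} := by
    intro p hp
    by_cases hpx : p = x
    · simp [f, hpx, hy, hne]
    · simp [f, hpx, hp]
  have f1 : ∀ p ∈ S, ∀ q ∈ S, (q = p ∨ H.Adj p q) → (q = f p ∨ H.Adj (f p) q) := by
    intro p hp q hq hpq
    by_cases hpx : p = x
    · subst hpx
      simpa [f] using hdom q hq hpq
    · simpa [f, hpx] using hpq
  have f2 : ∀ p ∈ S, ∀ q ∈ S, (q = p ∨ H.Adj p q) → (f q = f p ∨ H.Adj (f p) (f q)) := by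
    intro p hp q hq hpq
    by_cases hqx : q = x
    · have h1 := f1 q hq (f p) (fmem p hp).1
        (by
          rcases f1 p hp q hq hpq with h | h
          · exact Or.inl h.symm
          · exact Or.inr h.symm)
      rcases h1 with h | h
      · exact Or.inl h.symm
      · exact Or.inr h.symm
    · have : f q = q := by simp [f, hqx]
      rw [this]
      exact f1 p hp q hq hpq
  refine ⟨N + 1, fun k p => if k ≤ N then ρ k (f p) else p, c, ?_, ?_, ?_⟩
  · intro p hp
    simpa using h0 _ (fmem p hp)
  · intro p hp
    simp
  · intro k hk p hp q hq hpq
    rcases Nat.lt_or_ge k N with hkN | hkN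
    · have a : k ≤ N := hkN.le
      have b : k + 1 ≤ N := hkN
      simp only [a, b, if_true]
      exact hs k hkN _ (fmem p hp) _ (fmem q hq) (f2 p hp q hq hpq)
    · have : k = N := by omega
      subst this
      have b : ¬ (k + 1 ≤ k) := by omega
      simp only [le_refl, b, if_true, if_false, hN _ (fmem p hp)]
      exact f1 p hp q hq hpq

theorem cwData_lower {W : Type u} [Finite W] (H : SimpleGraph W) (r : W → W → Prop)
    [IsWellOrder W r] (hr : ConstructionOrderSpec H r) (n : ℕ) :
    ∀ S : Set W, S.ncard = n + 1 → (∀ x ∈ S, ∀ y, r y x → y ∈ S) → CWData H S := by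
  induction n with
  | zero =>
    intro S hS _
    obtain ⟨x, rfl⟩ := Set.ncard_eq_one.1 hS
    exact ⟨0, fun _ p => p, x, by simp, by simp, by simp⟩
  | succ n ih =>
    intro S hS hl
    have hne : S.Nonempty := by
      apply Set.nonempty_of_ncard_ne_zero
      omega
    have wf : WellFounded (Function.swap r) := Finite.wellFounded_of_trans_of_irrefl _
    obtain ⟨x, hx, hmax⟩ := wf.has_min S hne
    have hmax' : ∀ z ∈ S, r z x ∨ z = x := by
      intro z hz
      rcases trichotomous_of r z x with h | h | h
      · exact Or.inl h
      · exact Or.inr h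
      · exact absurd h (hmax z hz)
    have hcard : (S \ {x}).ncard = n + 1 := by
      rw [Set.ncard_sdiff_singleton_of_mem hx, hS]; rfl
    have hne2 : (S \ {x}).Nonempty := by
      apply Set.nonempty_of_ncard_ne_zero
      omega
    obtain ⟨z, hz, hzx⟩ := hne2
    have hzr : r z x := (hmax' z hz).resolve_right hzx
    obtain ⟨y, hyx, hne3, hdom⟩ := hr x ⟨z, hzr⟩
    refine cwData_step H S x y (hl x hx y hyx) ⟨hne3, fun w hw => hdom w (hmax' w hw)⟩ (ih _ hcard ?_)
    intro a ha b hb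
    refine ⟨hl a ha.1 b hb, ?_⟩
    rintro rfl
    exact hmax a ha.1 hb

theorem cwData_of_constructible {V : Type u} (G : SimpleGraph V) (U : Set V) (hU : U.Finite)
    (hne : U.Nonempty) (hc : Constructible (G.induce U)) : CWData G U := by
  classical
  obtain ⟨r, hwo, hr⟩ := hc
  have : Finite U := hU
  have hn : (Set.univ : Set U).Nonempty := ⟨⟨_, hne.some_mem⟩, trivial⟩
  have hpos : 0 < (Set.univ : Set U).ncard := (Set.ncard_pos (Set.toFinite _)).2 hn
  obtain ⟨N, ρ, c, h0, hN, hs⟩ := cwData_lower (G.induce U) r hr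
    ((Set.univ : Set U).ncard - 1) Set.univ (by omega) (by simp)
  refine ⟨N, fun k v => if h : v ∈ U then (ρ k ⟨v, h⟩ : V) else v, c, ?_, ?_, ?_⟩
  · intro p hp
    simp [hp, h0]
  · intro p hp
    simp [hp, hN]
  · intro k hk p hp q hq hpq
    have := hs k hk ⟨p, hp⟩ trivial ⟨q, hq⟩ trivial (by simpa using hpq)
    simp only [hp, hq, dif_pos]
    rcases this with h | h
    · exact Or.inl (congrArg Subtype.val h)
    · exact Or.inr h

open Classical in
/-- The cop strategy as a function of the reversed robber history. -/
noncomputable def copTau {V : Type u} (G : SimpleGraph V) (ρ : ℕ → V → V) (c : V) : List V → V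
  | [] => c
  | p :: l =>
    if ρ (l.length + 1) p = copTau G ρ c l ∨ G.Adj (copTau G ρ c l) (ρ (l.length + 1) p)
    then ρ (l.length + 1) p else copTau G ρ c l

theorem cop_forces_robber_out_of_finite_set {V : Type u} (G : SimpleGraph V)
    (hconn : G.Connected) (hlc : LocallyConstructible G) (A : Set V) (hA : A.Finite) :
    ∃ σ : List V → V, LegalCop G σ ∧
      ∀ r : ℕ → V, LegalRun G r →
        ∃ m : ℕ, (copPos σ r m = r m ∨ copPos σ r (m + 1) = r m) ∨ r m ∉ A := by
  obtain ⟨v⟩ := hconn.nonempty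
  obtain ⟨U, hAU, hU, hc⟩ := hlc (insert v A) (hA.insert v)
  obtain ⟨N, ρ, c, h0, hN, hs⟩ := cwData_of_constructible G U hU ⟨v, hAU (by simp)⟩ hc
  refine ⟨fun l => copTau G ρ c l.reverse, ?_, ?_⟩
  · intro l hl
    obtain ⟨l', a, rfl⟩ := List.eq_nil_or_concat' l |>.resolve_left hl
    simp only [List.dropLast_concat, List.reverse_append, List.reverse_singleton,
      List.singleton_append, copTau]
    split_ifs with h
    · exact h
    · exact Or.inl rfl
  · intro r hr
    by_contra hcon
    push Not at hcon
    have hrU : ∀ m, r m ∈ U := fun m => hAU (Set.mem_insert_of_mem _ (hcon m).2)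
    have key : ∀ n ≤ N, copPos (fun l => copTau G ρ c l.reverse) r n = ρ n (r (n - 1)) := by
      intro n
      induction n with
      | zero =>
        intro _
        simp [copPos, copTau, h0 _ (hrU 0)]
      | succ n ih =>
        intro hn
        have ih' := ih (by omega)
        have hst := hs n (by omega) (r (n - 1)) (hrU _) (r n) (hrU _) (by
          cases n with
          | zero => exact Or.inl rfl
          | succ m => exact hr m)
        rw [← ih'] at hst
        simp only [copPos] at hst ⊢
        rw [List.ofFn_succ_last]
        simp only [List.reverse_append, List.reverse_singleton,
          List.singleton_append, copTau, Fin.val_castSucc, Fin.val_last, List.length_reverse,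
          List.length_ofFn, Nat.add_sub_cancel]
        exact if_pos (by simpa only [List.length_reverse, List.length_ofFn] using hst)
    have hfin := key N le_rfl
    rw [hN _ (hrU _)] at hfin
    cases N with
    | zero => exact (hcon 0).1.1 hfin
    | succ m => exact (hcon m).1.2 hfin
end

section
/- Every constructible graph is locally constructible: if G is a constructible graph and V is a finite set of vertices of G, then there exists a finite set U of vertices with V ⊆ U such that the induced subgraph G[U] is constructible. (Indeed, one may take U to be the union of the trails, under a fixed domination map, of all vertices of V.) -/
universe u

theorem exists_trail {V : Type u} (G : SimpleGraph V) (r : V → V → Prop)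
    (hwf : WellFounded r) (h : ConstructionOrderSpec G r) (x : V) :
    ∃ T : Set V, T.Finite ∧ x ∈ T ∧ ∀ y ∈ T, (∃ z, r z y) →
      ∃ z ∈ T, r z y ∧ DominatesOn G {w | r w y ∨ w = y} z y := by
  induction x using hwf.induction with
  | _ x ih =>
    by_cases hx : ∃ y, r y x
    · obtain ⟨y, hyx, hd⟩ := h x hx
      obtain ⟨T, hT, hyT, hc⟩ := ih y hyx
      refine ⟨insert x T, hT.insert x, Set.mem_insert _ _, ?_⟩
      rintro w (rfl | hw) hz
      · exact ⟨y, Set.mem_insert_of_mem _ hyT, hyx, hd⟩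
      · obtain ⟨z, hz, hz'⟩ := hc w hw hz
        exact ⟨z, Set.mem_insert_of_mem _ hz, hz'⟩
    · refine ⟨{x}, Set.finite_singleton x, rfl, ?_⟩
      rintro w rfl hz
      exact absurd hz hx

theorem locallyConstructible_of_constructible {V : Type u} (G : SimpleGraph V)
    (h : Constructible G) : LocallyConstructible G := by
  obtain ⟨r, hr, hs⟩ := h
  intro A hA
  choose T hT hmem hc using exists_trail G r hr.wf hs
  refine ⟨⋃ a ∈ A, T a, fun a ha => Set.mem_biUnion ha (hmem a),
    hA.biUnion fun a _ => hT a, Subrel r (· ∈ ⋃ a ∈ A, T a), inferInstance, ?_⟩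
  rintro ⟨x, hx⟩ ⟨⟨y, hy⟩, hyx⟩
  obtain ⟨a, ha, hxa⟩ := Set.mem_iUnion₂.1 hx
  obtain ⟨z, hz, hzx, hne, hd⟩ := hc a x hxa ⟨y, hyx⟩
  refine ⟨⟨z, Set.mem_biUnion ha hz⟩, hzx, fun e => hne (congrArg Subtype.val e), ?_⟩
  rintro ⟨w, hw⟩ hwx hadj
  have := hd w (hwx.imp id (congrArg Subtype.val)) (hadj.imp (congrArg Subtype.val) id)
  exact this.imp Subtype.ext id
end

section
/- Let (G_n)_{n≥0} be a nested sequence of finite graphs (each G_n is an induced subgraph of G_{n+1}), and suppose that G_k is constructible for some k. Then the induced subgraph of the union graph ⊔G_n on the vertex set {(m, x) : m ≤ k, x ∈ V(G_m)} is constructible. -/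
universe u

/-- The union graph `⊔ G_n` of a nested sequence of graphs `G_n = H[S n]` (encoded by an
ambient graph `H` and a nested sequence of vertex sets `S`): vertex set the disjoint union
`{(n, x) : x ∈ S n}`, with distinct `(n, x)` and `(n', x')` adjacent iff `|n - n'| ≤ 1` and
`x` and `x'` are adjacent or equal. -/
def unionGraph {V : Type u} (H : SimpleGraph V) (S : ℕ → Set V) :
    SimpleGraph {p : ℕ × V // p.2 ∈ S p.1} :=
  SimpleGraph.fromRel (fun p q =>
    (p.val.1 ≤ q.val.1 + 1 ∧ q.val.1 ≤ p.val.1 + 1) ∧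
    (p.val.2 = q.val.2 ∨ H.Adj p.val.2 q.val.2))

theorem unionGraph_initial_segment_constructible {V : Type u} (H : SimpleGraph V)
    (S : ℕ → Set V) (hfin : ∀ m, (S m).Finite) (hmono : Monotone S) (k : ℕ)
    (hk : Constructible (H.induce (S k))) :
    Constructible ((unionGraph H S).induce {p | p.val.1 ≤ k}) := by
  obtain ⟨r, hr, hspec⟩ := hk
  let f : {p : {p : ℕ × V // p.2 ∈ S p.1} | p.val.1 ≤ k} ↪ ℕ × S k :=
    ⟨fun p => (k - p.val.val.1, ⟨p.val.val.2, hmono p.property p.val.property⟩), by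
      rintro ⟨⟨⟨m, x⟩, hx⟩, hm⟩ ⟨⟨⟨n, y⟩, hy⟩, hn⟩ h
      simp only [Prod.mk.injEq, Subtype.mk.injEq, Set.mem_ofPred_eq] at h hm hn ⊢
      exact ⟨by omega, h.2⟩⟩
  have hf : ∀ p, f p =
      (k - p.val.val.1, ⟨p.val.val.2, hmono p.property p.val.property⟩) := fun p => rfl
  clear_value f
  refine ⟨f ⁻¹'o (Prod.Lex (· < ·) r), (RelEmbedding.preimage f _).isWellOrder, ?_⟩
  rintro ⟨⟨⟨m, x⟩, hx⟩, hm⟩ ⟨⟨⟨⟨n, y⟩, hy⟩, hn⟩, hlt⟩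
  have hm' : m ≤ k := hm
  have hn' : n ≤ k := hn
  have hxk : x ∈ S k := hmono hm' hx
  rcases hm'.lt_or_eq with hmk | rfl
  · refine ⟨⟨⟨⟨m+1, x⟩, hmono (Nat.le_succ m) hx⟩, hmk⟩, ?_, ?_, ?_⟩
    · simp only [Order.Preimage, Prod.lex_def, hf]
      left; omega
    · intro h
      simp at h
    · rintro ⟨⟨⟨l, z⟩, hz⟩, hl⟩ hmem hadj
      have hl' : l ≤ k := hl
      simp only [Order.Preimage, Prod.lex_def, hf, Set.mem_ofPred_eq,
        Subtype.mk.injEq, Prod.mk.injEq] at hmem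
      have hml : m ≤ l := by omega
      clear hmem
      simp only [unionGraph, SimpleGraph.comap_adj, SimpleGraph.fromRel_adj, ne_eq,
        Function.Embedding.subtype_apply, Subtype.mk.injEq, Prod.mk.injEq] at hadj ⊢
      grind [SimpleGraph.adj_comm]
  · have hex : ∃ y, r y ⟨x, hxk⟩ := by
      simp only [Order.Preimage, Prod.lex_def, hf] at hlt
      rcases hlt with h | h
      · omega
      · exact ⟨_, h.2⟩
    obtain ⟨⟨w, hw⟩, hrw, hne, hdom⟩ := hspec ⟨x, hxk⟩ hex
    refine ⟨⟨⟨⟨m, w⟩, hw⟩, show m ≤ m from le_refl m⟩, ?_, ?_, ?_⟩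
    · simp only [Order.Preimage, Prod.lex_def, hf]
      exact Or.inr ⟨trivial, hrw⟩
    · intro h
      apply hne
      simpa using h
    · rintro ⟨⟨⟨l, z⟩, hz⟩, hl⟩ hmem hadj
      have hl' : l ≤ m := hl
      have hzk : z ∈ S m := hmono hl' hz
      simp only [Order.Preimage, Prod.lex_def, hf, Set.mem_ofPred_eq,
        Subtype.mk.injEq, Prod.mk.injEq] at hmem
      have hml : l = m := by omega
      subst hml
      have := hdom ⟨z, hzk⟩ (by
        simp only [Set.mem_ofPred_eq, Subtype.mk.injEq]
        rcases hmem with (h | h) | h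
        · omega
        · exact Or.inl h.2
        · exact Or.inr h.2)
      simp only [unionGraph, SimpleGraph.comap_adj, SimpleGraph.fromRel_adj, ne_eq,
        Function.Embedding.subtype_apply, Subtype.mk.injEq, Prod.mk.injEq] at hadj this ⊢
      clear hmem hdom hspec
      grind [SimpleGraph.adj_comm]
end

section
/- Let α be a countable non-zero limit ordinal. Then there exists a countably infinite family of pairwise disjoint subsets of the set of ordinals less than α, each of which has order type exactly α. -/
theorem aux_div_mono {x y : Ordinal} (h : x ≤ y) : x / Ordinal.omega0 ≤ y / Ordinal.omega0 := by
  by_contra! hc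
  rw [← Ordinal.lt_mul_iff_div_lt Ordinal.omega0_ne_zero] at hc
  have := h.trans_lt hc
  rw [Ordinal.lt_mul_iff_div_lt Ordinal.omega0_ne_zero] at this
  exact lt_irrefl _ this

theorem aux_natCoord (x : Ordinal) : ∃ n : ℕ, x % Ordinal.omega0 = n :=
  Ordinal.lt_omega0.1 (Ordinal.mod_lt x Ordinal.omega0_ne_zero)

/-- The finite part of an ordinal. -/
noncomputable def natCoord (x : Ordinal) : ℕ := (aux_natCoord x).choose

theorem natCoord_spec (x : Ordinal) : x % Ordinal.omega0 = natCoord x := (aux_natCoord x).choose_spec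

/-- The map `ω * b + n ↦ ω * b + pair i n`. -/
noncomputable def shiftMap (i : ℕ) (x : Ordinal) : Ordinal :=
  Ordinal.omega0 * (x / Ordinal.omega0) + (Nat.pair i (natCoord x) : ℕ)

theorem shiftMap_div (i : ℕ) (x : Ordinal) :
    shiftMap i x / Ordinal.omega0 = x / Ordinal.omega0 := by
  rw [shiftMap, Ordinal.mul_add_div _ Ordinal.omega0_ne_zero,
    Ordinal.div_eq_zero_of_lt (Ordinal.natCast_lt_omega0 _), add_zero]

theorem shiftMap_mod (i : ℕ) (x : Ordinal) :
    shiftMap i x % Ordinal.omega0 = (Nat.pair i (natCoord x) : ℕ) := by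
  rw [shiftMap, Ordinal.mul_add_mod_self, Ordinal.mod_eq_of_lt (Ordinal.natCast_lt_omega0 _)]

theorem shiftMap_strictMono (i : ℕ) : StrictMono (shiftMap i) := by
  intro x y hxy
  rcases (aux_div_mono hxy.le).lt_or_eq with h | h
  · by_contra! hc
    have := aux_div_mono hc
    rw [shiftMap_div, shiftMap_div] at this
    exact absurd h this.not_gt
  · have hn : natCoord x < natCoord y := by
      rw [← Ordinal.div_add_mod x Ordinal.omega0, ← Ordinal.div_add_mod y Ordinal.omega0, h,
        natCoord_spec, natCoord_spec] at hxy
      simpa using hxy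
    rw [shiftMap, shiftMap, h]
    have := Nat.pair_lt_pair_right i hn
    gcongr

theorem exists_countably_many_disjoint_subsets_of_full_orderType (α : Ordinal)
    (hlim : Order.IsSuccLimit α) (hcount : α.card ≤ Cardinal.aleph0) :
    ∃ Q : ℕ → Set Ordinal,
      (∀ i, Q i ⊆ Set.Iio α) ∧
      (∀ i j : ℕ, i ≠ j → Disjoint (Q i) (Q j)) ∧
      (∀ i, HasOrderType (Q i) α) := by
  refine ⟨fun i => shiftMap i '' Set.Iio α, ?_, ?_, ?_⟩
  · rintro i _ ⟨x, hx, rfl⟩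
    obtain ⟨b, rfl⟩ := Ordinal.isSuccPrelimit_iff_omega0_dvd.1 hlim.isSuccPrelimit
    simp only [Set.mem_Iio] at hx ⊢
    rw [Ordinal.lt_mul_iff_div_lt Ordinal.omega0_ne_zero] at hx ⊢
    rwa [shiftMap_div]
  · intro i j hij
    rw [Set.disjoint_left]
    rintro _ ⟨x, _, rfl⟩ ⟨y, _, h⟩
    have := congrArg (· % Ordinal.omega0) h
    simp only [shiftMap_mod, Nat.cast_inj, Nat.pair_eq_pair] at this
    exact hij this.1.symm
  · intro i
    exact ⟨(((shiftMap_strictMono i).strictMonoOn _).orderIso _ _).symm⟩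
end
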